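/- arXiv:1804.02206 — 2 statements merged into one kernel-verified Lean document; each statement's English description precedes it below -/
import Mathlib

section
/- Let q > 2 and let u : ℝ/ℤ → ℝⁿ be an embedded, regular C¹ curve. Then TP(u) < ∞ if and only if the unit tangent field u'/|u'| belongs to W^{1-1/q,q}(ℝ/ℤ, ℝⁿ), i.e. if and only if [u'/|u'|]_{W^{1-1/q,q}} < ∞. -/
open MeasureTheory Set Filter
open scoped RealInnerProductSpace ENNReal Topology

noncomputable section

/-- The distance on the circle `ℝ/ℤ` between the points represented by `x` and `y`. -/
def circDist (x y : ℝ) : ℝ := ‖((x - y : ℝ) : AddCircle (1 : ℝ))‖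

/-- The representative of `z` modulo `1` lying in `(-1/2, 1/2]`. -/
def wrap (z : ℝ) : ℝ := 1 / 2 - Int.fract (1 / 2 - z)

/-- Squared wedge norm `|a ∧ b|² = |a|²|b|² - ⟨a,b⟩²`. -/
def wedgeSq {n : ℕ} (a b : EuclideanSpace ℝ (Fin n)) : ℝ :=
  ‖a‖ ^ 2 * ‖b‖ ^ 2 - ⟪a, b⟫ ^ 2

/-- Wedge inner product `⟨a∧b, c∧d⟩ = ⟨a,c⟩⟨b,d⟩ - ⟨a,d⟩⟨b,c⟩`. -/
def wedgeInner {n : ℕ} (a b c d : EuclideanSpace ℝ (Fin n)) : ℝ :=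
  ⟪a, c⟫ * ⟪b, d⟫ - ⟪a, d⟫ * ⟪b, c⟫

/-- Fundamental domain for double integrals over `(ℝ/ℤ)²`. -/
def unitSq : Set (ℝ × ℝ) := Ioc (0 : ℝ) 1 ×ˢ Ioc (0 : ℝ) 1

/-- The tangent-point functional `TP` (extended-real-valued). -/
def TPe {n : ℕ} (q : ℝ) (u : ℝ → EuclideanSpace ℝ (Fin n)) : ℝ≥0∞ :=
  ENNReal.ofReal (1 / q) *
    ∫⁻ p in unitSq, ENNReal.ofReal
      (wedgeSq (deriv u p.2) (u p.1 - u p.2) ^ (q / 2) / ‖u p.1 - u p.2‖ ^ (2 * q))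

/-- The tangent-point functional `TP` (real-valued). -/
def TPr {n : ℕ} (q : ℝ) (u : ℝ → EuclideanSpace ℝ (Fin n)) : ℝ := (TPe q u).toReal

/-- The `q`-th power of the Sobolev–Slobodeckii seminorm `[f]_{W^{s,q}}` on `ℝ/ℤ`. -/
def sobSemPow {n : ℕ} (s q : ℝ) (f : ℝ → EuclideanSpace ℝ (Fin n)) : ℝ≥0∞ :=
  ∫⁻ p in unitSq, ENNReal.ofReal (‖f p.1 - f p.2‖ ^ q / circDist p.1 p.2 ^ (1 + s * q))

/-- The `W^{s,q}`-norm `‖f‖_{L^q} + [f]_{W^{s,q}}`. -/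
def Wnorm {n : ℕ} (s q : ℝ) (f : ℝ → EuclideanSpace ℝ (Fin n)) : ℝ :=
  (∫ x in Ioc (0 : ℝ) 1, ‖f x‖ ^ q) ^ (1 / q) + (sobSemPow s q f).toReal ^ (1 / q)

/-- The bi-Lipschitz constant `bil(u) = sup_{x ≢ y} |x-y|_{ℝ/ℤ}/|u(x)-u(y)|`. -/
def bil {n : ℕ} (u : ℝ → EuclideanSpace ℝ (Fin n)) : ℝ≥0∞ :=
  ⨆ (x : ℝ) (y : ℝ) (_ : circDist x y ≠ 0),
    ENNReal.ofReal (circDist x y) / ENNReal.ofReal ‖u x - u y‖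

/-- The `L^∞`-norm of the derivative of `u`. -/
def linfD {n : ℕ} (u : ℝ → EuclideanSpace ℝ (Fin n)) : ℝ≥0∞ :=
  ⨆ x : ℝ, (‖deriv u x‖₊ : ℝ≥0∞)

/-- A periodic curve is embedded if it is injective on the circle `ℝ/ℤ`. -/
def Embedded {n : ℕ} (u : ℝ → EuclideanSpace ℝ (Fin n)) : Prop :=
  ∀ x y : ℝ, u x = u y → ((x : AddCircle (1 : ℝ)) = (y : AddCircle (1 : ℝ)))

/-- A curve is regular if `min_{ℝ/ℤ} |u'| > 0`. -/
def Regular {n : ℕ} (u : ℝ → EuclideanSpace ℝ (Fin n)) : Prop :=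
  0 < ⨅ x : ℝ, ‖deriv u x‖

/-- Orthogonal projection of `b` onto the orthogonal complement of `ℝ a`. -/
def projPerp {n : ℕ} (a b : EuclideanSpace ℝ (Fin n)) : EuclideanSpace ℝ (Fin n) :=
  b - (⟪b, a⟫ / ‖a‖ ^ 2) • a

/-- The classical tangent-point functional (extended-real-valued). -/
def TPcle {n : ℕ} (q : ℝ) (u : ℝ → EuclideanSpace ℝ (Fin n)) : ℝ≥0∞ :=
  ENNReal.ofReal (1 / q) *
    ∫⁻ p in unitSq, ENNReal.ofReal
      (‖projPerp (deriv u p.2) (u p.1 - u p.2)‖ ^ q / ‖u p.1 - u p.2‖ ^ (2 * q) *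
        (‖deriv u p.1‖ * ‖deriv u p.2‖))

/-- The integrand of the functional `M(u; v, w)`. -/
def Mintegrand {n : ℕ} (q : ℝ) (u v w : ℝ → EuclideanSpace ℝ (Fin n)) (p : ℝ × ℝ) : ℝ :=
  wedgeSq (deriv u p.2) (u p.1 - u p.2) ^ ((q - 2) / 2) / ‖u p.1 - u p.2‖ ^ (2 * q) *
    wedgeInner (deriv u p.2) (u p.1 - u p.2) (deriv v p.2)
      (w p.1 - w p.2 - wrap (p.1 - p.2) • deriv w p.2)

/-- The functional `M(u; v, w)` appearing in the first variation of `TP`. -/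
def Mfun {n : ℕ} (q : ℝ) (u v w : ℝ → EuclideanSpace ℝ (Fin n)) : ℝ :=
  ∫ p in unitSq, Mintegrand q u v w p

/-- The integrand of the functional `A(u; v, w)`. -/
def Aintegrand {n : ℕ} (q : ℝ) (u v w : ℝ → EuclideanSpace ℝ (Fin n)) (p : ℝ × ℝ) : ℝ :=
  wedgeSq (deriv u p.2) (u p.1 - u p.2) ^ (q / 2) / ‖u p.1 - u p.2‖ ^ (2 * q + 2) *
    ⟪v p.1 - v p.2, w p.1 - w p.2⟫

/-- The functional `A(u; v, w)` appearing in the first variation of `TP`. -/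
def Afun {n : ℕ} (q : ℝ) (u v w : ℝ → EuclideanSpace ℝ (Fin n)) : ℝ :=
  ∫ p in unitSq, Aintegrand q u v w p

/-- The first variation `δTP(u)[w] = M(u;u,w) + M(u;w,u) - 2A(u;u,w)`. -/
def deltaTP {n : ℕ} (q : ℝ) (u w : ℝ → EuclideanSpace ℝ (Fin n)) : ℝ :=
  Mfun q u u w + Mfun q u w u - 2 * Afun q u u w

/-- The `H²` inner product on periodic curves. -/
def H2inner (v w : ℝ → EuclideanSpace ℝ (Fin 3)) : ℝ :=
  ∫ x in Ioc (0 : ℝ) 1,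
    (⟪v x, w x⟫ + ⟪deriv v x, deriv w x⟫ + ⟪deriv (deriv v) x, deriv (deriv w) x⟫)

/-- The total energy `E(u) = (κ/2)∫|u''|² + ρ TP(u)`. -/
def energyE (κ ρ q : ℝ) (u : ℝ → EuclideanSpace ℝ (Fin 3)) : ℝ :=
  κ / 2 * (∫ x in Ioc (0 : ℝ) 1, ‖deriv (deriv u) x‖ ^ 2) + ρ * TPr q u

/-!
Write `u (y + h) - u y = h • V y h`, where `V` is the mean velocity on the arc. Since `V` is
continuous and `V y 0 = u' y`, embeddedness and regularity keep `‖V‖` between positive constants for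
`|h| ≤ 1/2`, and the tangent-point quotient `|u' ∧ (u x - u y)| / |u x - u y|²` is comparable to
`|u' ∧ V| / |h|`.

Near the diagonal `u' y`, `u' (y + h)` and `V y h` make acute angles, so the distance between the
two unit tangents is controlled by the wedges of `u' y` and `u' (y + h)` with the chord direction;
away from the diagonal the difference quotient of the tangent is bounded. Conversely, subtracting
from `V` its component along `u' y` shows that the wedge sees only the mean oscillation of the unit
tangent on the arc, and averaging over dilations of the increment `h` is bounded on `L^q` by a
Hardy-type inequality.
-/

section WedgeNorm

variable {E : Type*} [NormedAddCommGroup E] [InnerProductSpace ℝ E]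

/-- The norm `|a ∧ b|` of the bivector `a ∧ b` in an arbitrary real inner product space, that is,
the area of the parallelogram spanned by `a` and `b`; its square is `wedgeSq a b` in `ℝⁿ`. -/
def wedgeNorm (a b : E) : ℝ := √(‖a‖ ^ 2 * ‖b‖ ^ 2 - ⟪a, b⟫ ^ 2)

lemma wedgeNorm_nonneg (a b : E) : 0 ≤ wedgeNorm a b := Real.sqrt_nonneg _

lemma wedgeNorm_sq (a b : E) : wedgeNorm a b ^ 2 = ‖a‖ ^ 2 * ‖b‖ ^ 2 - ⟪a, b⟫ ^ 2 := by
  refine Real.sq_sqrt (sub_nonneg.2 ?_)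
  rw [← mul_pow, ← sq_abs ⟪a, b⟫]
  exact pow_le_pow_left₀ (abs_nonneg _) (abs_real_inner_le_norm a b) 2

lemma wedgeNorm_le_norm_mul_norm (a b : E) : wedgeNorm a b ≤ ‖a‖ * ‖b‖ :=
  Real.sqrt_le_iff.2 ⟨by positivity, by rw [mul_pow]; linarith [sq_nonneg ⟪a, b⟫]⟩

lemma wedgeNorm_smul_right (r : ℝ) (a b : E) : wedgeNorm a (r • b) = |r| * wedgeNorm a b := by
  rw [wedgeNorm, wedgeNorm, ← Real.sqrt_sq_eq_abs, ← Real.sqrt_mul (sq_nonneg r), norm_smul,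
    real_inner_smul_right, mul_pow, Real.norm_eq_abs, sq_abs]
  ring_nf

lemma wedgeNorm_sub_smul_self (a b : E) (r : ℝ) : wedgeNorm a (b - r • a) = wedgeNorm a b := by
  simp only [wedgeNorm, norm_sub_sq_real, norm_smul, inner_sub_right, real_inner_smul_right,
    real_inner_self_eq_norm_sq, mul_pow, Real.norm_eq_abs, sq_abs, real_inner_comm a b]
  ring_nf

lemma norm_mul_norm_mul_norm_normalize_sub_le {a b : E} (hab : 0 ≤ ⟪a, b⟫) :
    ‖a‖ * ‖b‖ * ‖NormedSpace.normalize a - NormedSpace.normalize b‖ ≤ 2 * wedgeNorm a b := by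
  have hscale : (‖a‖ * ‖b‖) • (NormedSpace.normalize a - NormedSpace.normalize b) =
      ‖b‖ • a - ‖a‖ • b := by
    rw [smul_sub, mul_comm, mul_smul, NormedSpace.norm_smul_normalize, mul_comm, mul_smul,
      NormedSpace.norm_smul_normalize]
  have hsq : ‖‖b‖ • a - ‖a‖ • b‖ ^ 2 = 2 * (‖a‖ * ‖b‖) * (‖a‖ * ‖b‖ - ⟪a, b⟫) := by
    rw [norm_sub_sq_real, norm_smul, norm_smul, real_inner_smul_left, real_inner_smul_right,
      norm_norm, norm_norm]
    ring
  have hnorm := congrArg norm hscale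
  rw [norm_smul, Real.norm_of_nonneg (by positivity)] at hnorm
  rw [hnorm]
  refine (sq_le_sq₀ (norm_nonneg _) (by linarith [wedgeNorm_nonneg a b])).1 ?_
  rw [hsq, mul_pow, wedgeNorm_sq]
  nlinarith [real_inner_le_norm a b, mul_nonneg (norm_nonneg a) (norm_nonneg b)]

lemma mul_norm_mul_norm_normalize_sub_le {a b w : E} {m : ℝ} (ha : m ≤ ‖a‖) (hb : m ≤ ‖b‖)
    (haw : 0 ≤ ⟪a, w⟫) (hbw : 0 ≤ ⟪b, w⟫) :
    m * ‖w‖ * ‖NormedSpace.normalize a - NormedSpace.normalize b‖ ≤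
      2 * (wedgeNorm a w + wedgeNorm b w) := by
  have to_w : ∀ c : E, m ≤ ‖c‖ → 0 ≤ ⟪c, w⟫ →
      m * ‖w‖ * ‖NormedSpace.normalize c - NormedSpace.normalize w‖ ≤ 2 * wedgeNorm c w :=
    fun c hc hcw => le_trans (by gcongr) (norm_mul_norm_mul_norm_normalize_sub_le hcw)
  rcases le_total m 0 with hm | hm
  · have := wedgeNorm_nonneg a w
    have := wedgeNorm_nonneg b w
    nlinarith [mul_nonneg (norm_nonneg w)
      (norm_nonneg (NormedSpace.normalize a - NormedSpace.normalize b))]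
  calc m * ‖w‖ * ‖NormedSpace.normalize a - NormedSpace.normalize b‖
      ≤ m * ‖w‖ * (‖NormedSpace.normalize a - NormedSpace.normalize w‖ +
          ‖NormedSpace.normalize b - NormedSpace.normalize w‖) := by
        gcongr
        rw [norm_sub_rev (NormedSpace.normalize b)]
        exact norm_sub_le_norm_sub_add_norm_sub _ _ _
    _ ≤ 2 * (wedgeNorm a w + wedgeNorm b w) := by linarith [to_w a ha haw, to_w b hb hbw]

end WedgeNorm

section Periodic

lemma periodic_apply_add_int {α : Type*} {f : ℝ → α} (hf : Function.Periodic f 1) (x : ℝ)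
    (k : ℤ) : f (x + k) = f x := by
  simpa using hf.int_mul k x

lemma periodic_deriv {E : Type*} [NormedAddCommGroup E] [NormedSpace ℝ E] {f : ℝ → E} {c : ℝ}
    (hf : Function.Periodic f c) : Function.Periodic (deriv f) c := fun x => by
  rw [← deriv_comp_add_const, funext hf]

lemma exists_pos_forall_le_of_periodic {X : Type*} [TopologicalSpace X] {f : ℝ → X → ℝ} {c : ℝ}
    {K : Set X} (hf : Continuous ↿f) (hper : ∀ t, Function.Periodic (f · t) c) (hc : c ≠ 0)
    (hK : IsCompact K) (hpos : ∀ y, ∀ t ∈ K, 0 < f y t) :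
    ∃ m > 0, ∀ y, ∀ t ∈ K, m ≤ f y t := by
  obtain ⟨m, hm, hle⟩ := (isCompact_uIcc (a := 0) (b := 0 + c)).prod hK |>.exists_forall_le'
    hf.continuousOn fun p hp => hpos p.1 p.2 hp.2
  refine ⟨m, hm, fun y t ht => ?_⟩
  obtain ⟨z, hz, hyz⟩ : f y t ∈ (f · t) '' uIcc 0 (0 + c) := by
    rw [(hper t).image_uIcc hc]
    exact mem_range_self y
  exact (hle (z, t) ⟨hz, ht⟩).trans_eq hyz

lemma eventually_forall_pos_of_periodic {X : Type*} [TopologicalSpace X] {f : ℝ → X → ℝ} {c : ℝ}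
    {t₀ : X} (hf : Continuous ↿f) (hper : ∀ t, Function.Periodic (f · t) c) (hc : c ≠ 0)
    (hpos : ∀ y, 0 < f y t₀) : ∀ᶠ t in 𝓝 t₀, ∀ y, 0 < f y t := by
  have hev := (isCompact_uIcc (a := 0) (b := 0 + c)).eventually_forall_of_forall_eventually
    (x₀ := t₀) (P := fun t y => 0 < f y t) fun y _ =>
      (continuousAt_const.eventually_lt (hf.comp continuous_swap).continuousAt (hpos y))
  filter_upwards [hev] with t ht y
  obtain ⟨z, hz, hyz⟩ : f y t ∈ (f · t) '' uIcc 0 (0 + c) := by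
    rw [(hper t).image_uIcc hc]
    exact mem_range_self y
  exact (ht z hz).trans_eq hyz

end Periodic

section CircDist

lemma circDist_add_left {y h : ℝ} (hh : |h| ≤ 1 / 2) : circDist (y + h) y = |h| := by
  rw [circDist, add_sub_cancel_left, AddCircle.norm_coe_eq_abs_iff _ one_ne_zero]
  simpa using hh

lemma periodic_circDist (y : ℝ) : Function.Periodic (circDist · y) 1 := fun x => by
  simp only [circDist, add_sub_right_comm x, AddCircle.coe_add, AddCircle.coe_period, add_zero]

lemma measurable_circDist : Measurable fun p : ℝ × ℝ => circDist p.1 p.2 :=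
  (continuous_norm.comp
    ((AddCircle.continuous_mk' 1).comp (continuous_fst.sub continuous_snd))).measurable

lemma exists_add_int_eq_add (x y : ℝ) : ∃ (k : ℤ) (h : ℝ), |h| ≤ 1 / 2 ∧ x + k = y + h :=
  ⟨-round (x - y), x - y - round (x - y), abs_sub_round (x - y), by push_cast; ring⟩

end CircDist

section MeanVelocity

variable {E : Type*} [NormedAddCommGroup E] [NormedSpace ℝ E] {u : ℝ → E}

/-- The mean velocity of the curve `u` on the arc from `y` to `y + h`. For a `C¹` curve it extends
the difference quotient `(u (y + h) - u y) / h` continuously to `h = 0`. -/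
def meanVelocity (u : ℝ → E) (y h : ℝ) : E := ∫ s in (0 : ℝ)..1, deriv u (y + s * h)

lemma continuous_meanVelocity (hC1 : ContDiff ℝ 1 u) :
    Continuous fun p : ℝ × ℝ => meanVelocity u p.1 p.2 := by
  have := hC1.continuous_deriv_one
  exact intervalIntegral.continuous_parametric_intervalIntegral_of_continuous' (by fun_prop) 0 1

lemma periodic_meanVelocity {c : ℝ} (hper : Function.Periodic u c) (h : ℝ) :
    Function.Periodic (meanVelocity u · h) c := fun y => by
  simp only [meanVelocity, add_right_comm y c, (periodic_deriv hper) _]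

lemma norm_meanVelocity_le {C : ℝ} (hC : ∀ x, ‖deriv u x‖ ≤ C) (y h : ℝ) :
    ‖meanVelocity u y h‖ ≤ C := by
  simpa [meanVelocity] using intervalIntegral.norm_integral_le_of_norm_le_const (a := 0) (b := 1)
    fun s _ => hC (y + s * h)

variable [CompleteSpace E]

lemma meanVelocity_zero (u : ℝ → E) (y : ℝ) : meanVelocity u y 0 = deriv u y := by
  simp [meanVelocity]

lemma smul_meanVelocity (hC1 : ContDiff ℝ 1 u) (y h : ℝ) :
    h • meanVelocity u y h = u (y + h) - u y := by
  have := hC1.continuous_deriv_one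
  simpa [meanVelocity] using intervalIntegral.integral_unitInterval_deriv_eq_sub (f := u)
    (f' := deriv u) (z₀ := y) (z₁ := h) (by fun_prop)
    fun t _ => (hC1.differentiable one_ne_zero _).hasDerivAt

lemma meanVelocity_ne_zero (hC1 : ContDiff ℝ 1 u)
    (hinj : ∀ x y, u x = u y → (x : AddCircle (1 : ℝ)) = y) (hreg : ∀ x, deriv u x ≠ 0)
    {y h : ℝ} (hh : |h| ≤ 1 / 2) : meanVelocity u y h ≠ 0 := by
  rcases eq_or_ne h 0 with rfl | h0
  · rw [meanVelocity_zero]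
    exact hreg y
  · intro hzero
    have hcoll : u (y + h) = u y := by
      rw [← sub_eq_zero, ← smul_meanVelocity hC1, hzero, smul_zero]
    have hdist : circDist (y + h) y = 0 := by
      rw [circDist, AddCircle.coe_sub, hinj _ _ hcoll, sub_self, norm_zero]
    rw [circDist_add_left hh] at hdist
    exact h0 (abs_eq_zero.1 hdist)

lemma exists_pos_le_norm_meanVelocity (hC1 : ContDiff ℝ 1 u) (hper : Function.Periodic u 1)
    (hinj : ∀ x y, u x = u y → (x : AddCircle (1 : ℝ)) = y) (hreg : ∀ x, deriv u x ≠ 0) :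
    ∃ m > 0, ∀ y h, |h| ≤ 1 / 2 → m ≤ ‖meanVelocity u y h‖ := by
  obtain ⟨m, hm, hle⟩ := exists_pos_forall_le_of_periodic
    (f := fun y h => ‖meanVelocity u y h‖) (continuous_meanVelocity hC1).norm
    (fun h y => congrArg norm (periodic_meanVelocity hper h y)) one_ne_zero
    (isCompact_Icc (a := -(1 / 2 : ℝ)) (b := 1 / 2))
    fun y h hh => norm_pos_iff.2 (meanVelocity_ne_zero hC1 hinj hreg (abs_le.2 hh))
  exact ⟨m, hm, fun y h hh => hle y h (abs_le.1 hh)⟩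

end MeanVelocity

section Speed

variable {E : Type*} [NormedAddCommGroup E] [NormedSpace ℝ E] {u : ℝ → E}

lemma exists_norm_deriv_le (hC1 : ContDiff ℝ 1 u) (hper : Function.Periodic u 1) :
    ∃ C > 0, ∀ x, ‖deriv u x‖ ≤ C := by
  obtain ⟨C, hC, hle⟩ := ((periodic_deriv hper).isBounded_of_continuous one_ne_zero
    hC1.continuous_deriv_one).exists_pos_norm_le
  exact ⟨C, hC, fun x => hle _ (mem_range_self x)⟩

lemma exists_pos_le_norm_deriv (hC1 : ContDiff ℝ 1 u) (hper : Function.Periodic u 1)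
    (hreg : ∀ x, deriv u x ≠ 0) : ∃ m > 0, ∀ x, m ≤ ‖deriv u x‖ := by
  obtain ⟨m, hm, hle⟩ := exists_pos_forall_le_of_periodic (f := fun x (_ : Unit) => ‖deriv u x‖)
    (hC1.continuous_deriv_one.norm.comp continuous_fst)
    (fun _ x => congrArg norm (periodic_deriv hper x)) one_ne_zero isCompact_univ
    fun x _ _ => norm_pos_iff.2 (hreg x)
  exact ⟨m, hm, fun x => hle x () (mem_univ _)⟩

/-- The unit tangent field `u'/|u'|` of a curve. -/
def unitTangent (u : ℝ → E) (x : ℝ) : E := NormedSpace.normalize (deriv u x)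

lemma norm_smul_unitTangent (u : ℝ → E) (x : ℝ) : ‖deriv u x‖ • unitTangent u x = deriv u x :=
  NormedSpace.norm_smul_normalize _

lemma periodic_unitTangent {c : ℝ} (hper : Function.Periodic u c) :
    Function.Periodic (unitTangent u) c := fun x =>
  congrArg NormedSpace.normalize (periodic_deriv hper x)

lemma continuous_unitTangent (hC1 : ContDiff ℝ 1 u) (hreg : ∀ x, deriv u x ≠ 0) :
    Continuous (unitTangent u) :=
  (hC1.continuous_deriv_one.norm.inv₀ fun x => norm_ne_zero_iff.2 (hreg x)).smul
    hC1.continuous_deriv_one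

lemma norm_unitTangent_le_one (u : ℝ → E) (x : ℝ) : ‖unitTangent u x‖ ≤ 1 :=
  mem_closedBall_zero_iff.1 (inv_norm_smul_mem_unitClosedBall _)

/-- Subtracting the weighted mean of `|u'|` times the tangent at `y` leaves the mean of
`|u'| (T - T y)`, so only the oscillation of the tangent contributes. -/
lemma norm_meanVelocity_sub_smul_unitTangent_le [CompleteSpace E] (hC1 : ContDiff ℝ 1 u)
    (hreg : ∀ x, deriv u x ≠ 0) {C : ℝ} (hC : ∀ x, ‖deriv u x‖ ≤ C) (y h : ℝ) :
    ‖meanVelocity u y h - (∫ s in (0 : ℝ)..1, ‖deriv u (y + s * h)‖) • unitTangent u y‖ ≤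
      C * ∫ s in (0 : ℝ)..1, ‖unitTangent u (y + s * h) - unitTangent u y‖ := by
  have := hC1.continuous_deriv_one
  have hT := continuous_unitTangent hC1 hreg
  have hosc :
      meanVelocity u y h - (∫ s in (0 : ℝ)..1, ‖deriv u (y + s * h)‖) • unitTangent u y =
        ∫ s in (0 : ℝ)..1,
          ‖deriv u (y + s * h)‖ • (unitTangent u (y + s * h) - unitTangent u y) := by
    simp only [smul_sub, norm_smul_unitTangent]
    rw [intervalIntegral.integral_sub, intervalIntegral.integral_smul_const, meanVelocity]
    all_goals exact Continuous.intervalIntegrable (by fun_prop) _ _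
  rw [hosc, ← intervalIntegral.integral_const_mul]
  refine intervalIntegral.norm_integral_le_of_norm_le zero_le_one (ae_of_all _ fun s _ => ?_)
    (Continuous.intervalIntegrable (by fun_prop) _ _)
  rw [norm_smul, norm_norm]
  exact mul_le_mul_of_nonneg_right (hC _) (norm_nonneg _)

end Speed

section TangentPointRatio

variable {E : Type*} [NormedAddCommGroup E] [InnerProductSpace ℝ E] {u : ℝ → E}

/-- The quotient `|u'(y) ∧ (u(x) - u(y))| / |u(x) - u(y)|²`, whose `q`-th power is the integrand of
the tangent-point functional. At `u x = u y` it takes the junk value `0`. -/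
def tangentPointRatio (u : ℝ → E) (x y : ℝ) : ℝ :=
  wedgeNorm (deriv u y) (u x - u y) / ‖u x - u y‖ ^ 2

lemma tangentPointRatio_nonneg (u : ℝ → E) (x y : ℝ) : 0 ≤ tangentPointRatio u x y :=
  div_nonneg (wedgeNorm_nonneg _ _) (sq_nonneg _)

lemma periodic_tangentPointRatio_left {c : ℝ} (hper : Function.Periodic u c) (y : ℝ) :
    Function.Periodic (tangentPointRatio u · y) c := fun x => by
  simp only [tangentPointRatio, hper x]

lemma periodic_tangentPointRatio_right {c : ℝ} (hper : Function.Periodic u c) (x : ℝ) :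
    Function.Periodic (tangentPointRatio u x) c := fun y => by
  simp only [tangentPointRatio, hper y, periodic_deriv hper y]

lemma measurable_tangentPointRatio (hC1 : ContDiff ℝ 1 u) :
    Measurable fun p : ℝ × ℝ => tangentPointRatio u p.1 p.2 := by
  have hu := hC1.continuous
  have := hC1.continuous_deriv_one
  have hwedge : Continuous fun p : ℝ × ℝ => wedgeNorm (deriv u p.2) (u p.1 - u p.2) := by
    unfold wedgeNorm
    fun_prop
  have hchord : Continuous fun p : ℝ × ℝ => ‖u p.1 - u p.2‖ ^ 2 := by fun_prop
  exact hwedge.measurable.div hchord.measurable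

lemma wedgeNorm_smul_div_sq (a v : E) (h : ℝ) :
    wedgeNorm a (h • v) / ‖h • v‖ ^ 2 = wedgeNorm a v / (|h| * ‖v‖ ^ 2) := by
  rw [wedgeNorm_smul_right, norm_smul, Real.norm_eq_abs]
  rcases eq_or_ne h 0 with rfl | h0
  · simp
  · field_simp

lemma tangentPointRatio_add_left [CompleteSpace E] (hC1 : ContDiff ℝ 1 u) (y h : ℝ) :
    tangentPointRatio u (y + h) y =
      wedgeNorm (deriv u y) (meanVelocity u y h) / (|h| * ‖meanVelocity u y h‖ ^ 2) := by
  rw [tangentPointRatio, ← smul_meanVelocity hC1, wedgeNorm_smul_div_sq]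

lemma tangentPointRatio_add_right [CompleteSpace E] (hC1 : ContDiff ℝ 1 u) (y h : ℝ) :
    tangentPointRatio u y (y + h) =
      wedgeNorm (deriv u (y + h)) (meanVelocity u y h) / (|h| * ‖meanVelocity u y h‖ ^ 2) := by
  rw [tangentPointRatio, ← neg_sub, ← smul_meanVelocity hC1, ← neg_smul, wedgeNorm_smul_div_sq,
    abs_neg]

end TangentPointRatio

section CircSlope

variable {E : Type*} [NormedAddCommGroup E] {f : ℝ → E}

/-- The absolute difference quotient of a function on the circle `ℝ/ℤ`, whose `q`-th power is the
integrand of the `q`-th power of the `W^{1-1/q,q}`-seminorm. For `x = y` in `ℝ/ℤ` it takes the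
junk value `0`. -/
def circSlope (f : ℝ → E) (x y : ℝ) : ℝ := ‖f x - f y‖ / circDist x y

lemma circSlope_nonneg (f : ℝ → E) (x y : ℝ) : 0 ≤ circSlope f x y :=
  div_nonneg (norm_nonneg _) (norm_nonneg _)

lemma periodic_circSlope_left (hper : Function.Periodic f 1) (y : ℝ) :
    Function.Periodic (circSlope f · y) 1 := fun x => by
  simp only [circSlope, hper x, periodic_circDist y x]

lemma circSlope_add_left (f : ℝ → E) {y h : ℝ} (hh : |h| ≤ 1 / 2) :
    circSlope f (y + h) y = ‖f (y + h) - f y‖ / |h| := by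
  rw [circSlope, circDist_add_left hh]

lemma measurable_circSlope (hf : Continuous f) :
    Measurable fun p : ℝ × ℝ => circSlope f p.1 p.2 := by
  have hchord : Continuous fun p : ℝ × ℝ => ‖f p.1 - f p.2‖ := by fun_prop
  exact hchord.measurable.div measurable_circDist

end CircSlope

section PointwiseComparison

variable {E : Type*} [NormedAddCommGroup E] [InnerProductSpace ℝ E] [CompleteSpace E] {u : ℝ → E}

lemma eventually_forall_inner_meanVelocity_pos (hC1 : ContDiff ℝ 1 u)
    (hper : Function.Periodic u 1) (hreg : ∀ x, deriv u x ≠ 0) :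
    ∀ᶠ h in 𝓝 0, ∀ y, 0 < ⟪deriv u y, meanVelocity u y h⟫ ∧
      0 < ⟪deriv u (y + h), meanVelocity u y h⟫ := by
  have hv := hC1.continuous_deriv_one
  have hF := continuous_meanVelocity hC1
  have hpos (x : ℝ) : 0 < ⟪deriv u x, deriv u x⟫ := real_inner_self_pos.2 (hreg x)
  have hleft := eventually_forall_pos_of_periodic (t₀ := (0 : ℝ))
    (f := fun y h => ⟪deriv u y, meanVelocity u y h⟫)
    ((hv.comp continuous_fst).inner hF)
    (fun h y => by simp only [periodic_deriv hper y, periodic_meanVelocity hper h y]) one_ne_zero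
    fun y => by simpa only [meanVelocity_zero] using hpos y
  have hright := eventually_forall_pos_of_periodic (t₀ := (0 : ℝ))
    (f := fun y h => ⟪deriv u (y + h), meanVelocity u y h⟫)
    ((hv.comp (continuous_fst.add continuous_snd)).inner hF)
    (fun h y => by
      simp only [add_right_comm y 1 h, periodic_deriv hper (y + h), periodic_meanVelocity hper h y])
    one_ne_zero fun y => by simpa only [meanVelocity_zero, add_zero] using hpos y
  filter_upwards [hleft, hright] with h hl hr y using ⟨hl y, hr y⟩

lemma circSlope_unitTangent_le_of_inner_pos (hC1 : ContDiff ℝ 1 u) {m C : ℝ} (hm : 0 < m)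
    (hmu : ∀ x, m ≤ ‖deriv u x‖) (hCu : ∀ x, ‖deriv u x‖ ≤ C) {y h : ℝ} (hh : |h| ≤ 1 / 2)
    (hleft : 0 < ⟪deriv u y, meanVelocity u y h⟫)
    (hright : 0 < ⟪deriv u (y + h), meanVelocity u y h⟫) :
    circSlope (unitTangent u) (y + h) y ≤
      2 * C / m * (tangentPointRatio u (y + h) y + tangentPointRatio u y (y + h)) := by
  rw [circSlope_add_left _ hh, tangentPointRatio_add_left hC1, tangentPointRatio_add_right hC1]
  have hwedge := mul_norm_mul_norm_normalize_sub_le (hmu (y + h)) (hmu y) hright.le hleft.le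
  have hVC : ‖meanVelocity u y h‖ ≤ C := norm_meanVelocity_le hCu y h
  have hV : 0 < ‖meanVelocity u y h‖ := norm_pos_iff.2 fun h0 => by simp [h0] at hleft
  rw [← unitTangent, ← unitTangent] at hwedge
  have hW₁ := wedgeNorm_nonneg (deriv u (y + h)) (meanVelocity u y h)
  have hW₂ := wedgeNorm_nonneg (deriv u y) (meanVelocity u y h)
  set V := ‖meanVelocity u y h‖
  set W₁ := wedgeNorm (deriv u (y + h)) (meanVelocity u y h)
  set W₂ := wedgeNorm (deriv u y) (meanVelocity u y h)
  set D := ‖unitTangent u (y + h) - unitTangent u y‖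
  calc D / |h| = m * V * D / (m * V) / |h| := by field_simp
    _ ≤ 2 * (W₁ + W₂) / (m * V) / |h| := by gcongr
    _ = 2 * V / m * (W₂ / (|h| * V ^ 2) + W₁ / (|h| * V ^ 2)) := by
      rw [← add_div, ← div_div _ |h|]
      field_simp
      ring
    _ ≤ 2 * C / m * (W₂ / (|h| * V ^ 2) + W₁ / (|h| * V ^ 2)) := by gcongr

lemma exists_circSlope_unitTangent_le (hC1 : ContDiff ℝ 1 u) (hper : Function.Periodic u 1)
    (hreg : ∀ x, deriv u x ≠ 0) :
    ∃ K K' : ℝ, ∀ x y, circSlope (unitTangent u) x y ≤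
      K * (tangentPointRatio u x y + tangentPointRatio u y x) + K' := by
  obtain ⟨m, hm, hmu⟩ := exists_pos_le_norm_deriv hC1 hper hreg
  obtain ⟨C, hC, hCu⟩ := exists_norm_deriv_le hC1 hper
  obtain ⟨δ, hδ, hacute⟩ :=
    Metric.eventually_nhds_iff.1 (eventually_forall_inner_meanVelocity_pos hC1 hper hreg)
  refine ⟨2 * C / m, 2 / δ, fun x y => ?_⟩
  obtain ⟨k, h, hh, hxy⟩ := exists_add_int_eq_add x y
  rw [← periodic_apply_add_int (periodic_circSlope_left (periodic_unitTangent hper) y) x k,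
    ← periodic_apply_add_int (periodic_tangentPointRatio_left hper y) x k,
    ← periodic_apply_add_int (periodic_tangentPointRatio_right hper y) x k, hxy]
  rcases lt_or_ge |h| δ with hnear | hfar
  · have hangle := hacute (by simpa using hnear) y
    exact (circSlope_unitTangent_le_of_inner_pos hC1 hm hmu hCu hh hangle.1 hangle.2).trans
      (le_add_of_nonneg_right (by positivity))
  · have hratio := add_nonneg (tangentPointRatio_nonneg u (y + h) y)
      (tangentPointRatio_nonneg u y (y + h))
    refine le_add_of_nonneg_of_le (by positivity) ?_
    rw [circSlope_add_left _ hh, ← one_add_one_eq_two]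
    gcongr
    exact norm_sub_le_of_le (norm_unitTangent_le_one u _) (norm_unitTangent_le_one u _)

lemma exists_tangentPointRatio_le (hC1 : ContDiff ℝ 1 u) (hper : Function.Periodic u 1)
    (hinj : ∀ x y, u x = u y → (x : AddCircle (1 : ℝ)) = y) (hreg : ∀ x, deriv u x ≠ 0) :
    ∃ K ≥ 0, ∀ y h, |h| ≤ 1 / 2 → tangentPointRatio u (y + h) y ≤
      K * ∫ s in (0 : ℝ)..1, ‖unitTangent u (y + s * h) - unitTangent u y‖ / |h| := by
  obtain ⟨C, hC, hCu⟩ := exists_norm_deriv_le hC1 hper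
  obtain ⟨m, hm, hmu⟩ := exists_pos_le_norm_meanVelocity hC1 hper hinj hreg
  refine ⟨C ^ 2 / m ^ 2, by positivity, fun y h hh => ?_⟩
  set osc := ∫ s in (0 : ℝ)..1, ‖unitTangent u (y + s * h) - unitTangent u y‖ with hosc
  have hwedge : wedgeNorm (deriv u y) (meanVelocity u y h) ≤ C * (C * osc) := by
    set l := ∫ s in (0 : ℝ)..1, ‖deriv u (y + s * h)‖
    have hparallel : l • unitTangent u y = (l * ‖deriv u y‖⁻¹) • deriv u y := by
      rw [mul_smul]; rfl
    calc wedgeNorm (deriv u y) (meanVelocity u y h)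
        = wedgeNorm (deriv u y) (meanVelocity u y h - l • unitTangent u y) := by
          rw [hparallel, wedgeNorm_sub_smul_self]
      _ ≤ ‖deriv u y‖ * ‖meanVelocity u y h - l • unitTangent u y‖ :=
          wedgeNorm_le_norm_mul_norm _ _
      _ ≤ C * (C * osc) := by
          gcongr
          · exact hCu y
          · exact norm_meanVelocity_sub_smul_unitTangent_le hC1 hreg hCu y h
  rw [intervalIntegral.integral_div, ← hosc, tangentPointRatio_add_left hC1]
  calc wedgeNorm (deriv u y) (meanVelocity u y h) / (|h| * ‖meanVelocity u y h‖ ^ 2)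
      = wedgeNorm (deriv u y) (meanVelocity u y h) / ‖meanVelocity u y h‖ ^ 2 / |h| := by
        rw [div_div, mul_comm]
    _ ≤ C * (C * osc) / m ^ 2 / |h| := by
        have := (wedgeNorm_nonneg _ _).trans hwedge
        gcongr
        exact hmu y h hh
    _ = C ^ 2 / m ^ 2 * (osc / |h|) := by ring

end PointwiseComparison

section Integration

lemma lintegral_rpow_le_of_isProbabilityMeasure {α : Type*} [MeasurableSpace α] {μ : Measure α}
    [IsProbabilityMeasure μ] {f : α → ℝ≥0∞} (hf : AEMeasurable f μ) {q : ℝ} (hq : 1 ≤ q) :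
    (∫⁻ x, f x ∂μ) ^ q ≤ ∫⁻ x, f x ^ q ∂μ := by
  have hle := eLpNorm'_le_eLpNorm'_of_exponent_le one_pos hq μ hf.aestronglyMeasurable
  simp only [eLpNorm', enorm_eq_self, ENNReal.rpow_one, div_one, one_div] at hle
  rwa [← ENNReal.le_rpow_inv_iff (one_pos.trans_le hq)]

lemma setLIntegral_comp_mul_left_le {φ : ℝ → ℝ≥0∞} (hφ : Measurable φ) {r s : ℝ}
    (hs₀ : 0 < s) (hs₁ : s ≤ 1) :
    ∫⁻ h in Ioc (-r) r, φ (s * h) ≤ ENNReal.ofReal s⁻¹ * ∫⁻ k in Ioc (-r) r, φ k := by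
  rw [← lintegral_indicator measurableSet_Ioc, ← lintegral_indicator measurableSet_Ioc]
  calc ∫⁻ h, (Ioc (-r) r).indicator (fun h => φ (s * h)) h
      ≤ ∫⁻ h, (Ioc (-r) r).indicator φ (s * h) := by
        refine lintegral_mono (indicator_le fun h hh => ?_)
        have hmem : s * h ∈ Ioc (-r) r := ⟨by nlinarith [hh.1, hh.2], by nlinarith [hh.1, hh.2]⟩
        exact (indicator_of_mem hmem φ).ge
    _ = ∫⁻ k, (Ioc (-r) r).indicator φ k ∂(Measure.map (s * ·) volume) :=
        (lintegral_map (hφ.indicator measurableSet_Ioc) (measurable_const_mul s)).symm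
    _ = ENNReal.ofReal s⁻¹ * ∫⁻ k, (Ioc (-r) r).indicator φ k := by
        rw [Real.map_volume_mul_left hs₀.ne', lintegral_smul_measure, smul_eq_mul,
          abs_of_pos (inv_pos.2 hs₀)]

/-- A Hardy-type inequality for the weighted dilation average `h ↦ ∫₀¹ s φ(s h) ds`: by Jensen and
Tonelli it reduces to `s ^ q ∫ φ(s h) ^ q dh ≤ s ^ (q - 1) ∫ φ ^ q`, where `s ^ (q - 1) ≤ 1`. -/
lemma setLIntegral_rpow_dilation_average_le {φ : ℝ → ℝ≥0∞} (hφ : Measurable φ) {q : ℝ}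
    (hq : 1 ≤ q) (r : ℝ) :
    ∫⁻ h in Ioc (-r) r, (∫⁻ s in Ioc (0 : ℝ) 1, ENNReal.ofReal s * φ (s * h)) ^ q ≤
      ∫⁻ k in Ioc (-r) r, φ k ^ q := by
  have hq₀ : 0 ≤ q := zero_le_one.trans hq
  have : IsProbabilityMeasure (volume.restrict (Ioc (0 : ℝ) 1)) := ⟨by simp⟩
  have hdilate : ∀ s ∈ Ioc (0 : ℝ) 1,
      ∫⁻ h in Ioc (-r) r, (ENNReal.ofReal s * φ (s * h)) ^ q ≤ ∫⁻ k in Ioc (-r) r, φ k ^ q := by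
    rintro s ⟨hs₀, hs₁⟩
    have hweight : ENNReal.ofReal s ^ q * ENNReal.ofReal s⁻¹ ≤ 1 := by
      rw [ENNReal.ofReal_inv_of_pos hs₀, ← div_eq_mul_inv]
      refine ENNReal.div_le_of_le_mul ?_
      rw [one_mul]
      simpa using ENNReal.rpow_le_rpow_of_exponent_ge (ENNReal.ofReal_le_one.2 hs₁) hq
    calc ∫⁻ h in Ioc (-r) r, (ENNReal.ofReal s * φ (s * h)) ^ q
        = ENNReal.ofReal s ^ q * ∫⁻ h in Ioc (-r) r, φ (s * h) ^ q := by
          simp only [ENNReal.mul_rpow_of_nonneg _ _ hq₀]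
          exact lintegral_const_mul' _ _ (ENNReal.rpow_ne_top_of_nonneg hq₀ ENNReal.ofReal_ne_top)
      _ ≤ ENNReal.ofReal s ^ q * (ENNReal.ofReal s⁻¹ * ∫⁻ k in Ioc (-r) r, φ k ^ q) := by
          gcongr
          exact setLIntegral_comp_mul_left_le (hφ.pow_const q) hs₀ hs₁
      _ ≤ ∫⁻ k in Ioc (-r) r, φ k ^ q := by
          rw [← mul_assoc]
          exact mul_le_of_le_one_left' hweight
  calc ∫⁻ h in Ioc (-r) r, (∫⁻ s in Ioc (0 : ℝ) 1, ENNReal.ofReal s * φ (s * h)) ^ q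
      ≤ ∫⁻ h in Ioc (-r) r, ∫⁻ s in Ioc (0 : ℝ) 1, (ENNReal.ofReal s * φ (s * h)) ^ q :=
        lintegral_mono fun h => lintegral_rpow_le_of_isProbabilityMeasure (by fun_prop) hq
    _ = ∫⁻ s in Ioc (0 : ℝ) 1, ∫⁻ h in Ioc (-r) r, (ENNReal.ofReal s * φ (s * h)) ^ q :=
        lintegral_lintegral_swap (by fun_prop)
    _ ≤ ∫⁻ _ in Ioc (0 : ℝ) 1, ∫⁻ k in Ioc (-r) r, φ k ^ q :=
        setLIntegral_mono measurable_const hdilate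
    _ = ∫⁻ k in Ioc (-r) r, φ k ^ q := by simp

lemma setLIntegral_eq_translate_of_periodic {f : ℝ → ℝ≥0∞} (hf : Function.Periodic f 1) (y : ℝ) :
    ∫⁻ x in Ioc (0 : ℝ) 1, f x = ∫⁻ h in Ioc (-(1 / 2) : ℝ) (1 / 2), f (y + h) := by
  have hshift := (isAddFundamentalDomain_Ioc one_pos 0).setLIntegral_eq
    (isAddFundamentalDomain_Ioc one_pos (y + -(1 / 2))) f hf.map_vadd_zmultiples
  rw [zero_add] at hshift
  rw [hshift, ← (measurePreserving_add_left volume y).setLIntegral_comp_preimage_emb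
    (measurableEmbedding_addLeft y), preimage_const_add_Ioc]
  ring_nf

lemma volume_restrict_unitSq :
    volume.restrict unitSq =
      (volume.restrict (Ioc (0 : ℝ) 1)).prod (volume.restrict (Ioc (0 : ℝ) 1)) := by
  rw [Measure.prod_restrict, unitSq, Measure.volume_eq_prod]

lemma setLIntegral_unitSq_eq_of_periodic {f : ℝ → ℝ → ℝ≥0∞}
    (hf : Measurable fun p : ℝ × ℝ => f p.1 p.2) (hper : ∀ y, Function.Periodic (f · y) 1) :
    ∫⁻ p in unitSq, f p.1 p.2 =
      ∫⁻ y in Ioc (0 : ℝ) 1, ∫⁻ h in Ioc (-(1 / 2) : ℝ) (1 / 2), f (y + h) y := by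
  rw [volume_restrict_unitSq, lintegral_prod_symm' _ hf]
  exact lintegral_congr fun y => setLIntegral_eq_translate_of_periodic (hper y) y

lemma memLp_iff_lintegral_ofReal_rpow_lt_top {α : Type*} [MeasurableSpace α] {μ : Measure α}
    {f : α → ℝ} (hf : AEStronglyMeasurable f μ) (hf₀ : ∀ x, 0 ≤ f x) {q : ℝ} (hq : 0 < q) :
    MemLp f (ENNReal.ofReal q) μ ↔ ∫⁻ x, ENNReal.ofReal (f x ^ q) ∂μ < ⊤ := by
  rw [MemLp, and_iff_right hf, eLpNorm_lt_top_iff_lintegral_rpow_enorm_lt_top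
    (ENNReal.ofReal_pos.2 hq).ne' ENNReal.ofReal_ne_top, ENNReal.toReal_ofReal hq.le]
  simp only [Real.enorm_of_nonneg (hf₀ _), ENNReal.ofReal_rpow_of_nonneg (hf₀ _) hq.le]

end Integration

section Equivalence

variable {E : Type*} [NormedAddCommGroup E] [InnerProductSpace ℝ E] [CompleteSpace E] {u : ℝ → E}

lemma memLp_circSlope_unitTangent (hC1 : ContDiff ℝ 1 u) (hper : Function.Periodic u 1)
    (hreg : ∀ x, deriv u x ≠ 0) {p : ℝ≥0∞}
    (hr : MemLp (fun z : ℝ × ℝ => tangentPointRatio u z.1 z.2) p (volume.restrict unitSq)) :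
    MemLp (fun z : ℝ × ℝ => circSlope (unitTangent u) z.1 z.2) p (volume.restrict unitSq) := by
  obtain ⟨K, K', hle⟩ := exists_circSlope_unitTangent_le hC1 hper hreg
  rw [volume_restrict_unitSq] at hr ⊢
  have hswap := hr.comp_measurePreserving Measure.measurePreserving_swap
  refine (((hr.add hswap).const_mul K).add (memLp_const K')).mono'
    (measurable_circSlope (continuous_unitTangent hC1 hreg)).aestronglyMeasurable
    (ae_of_all _ fun z => ?_)
  rw [Real.norm_of_nonneg (circSlope_nonneg _ _ _)]
  exact hle z.1 z.2

lemma exists_ofReal_tangentPointRatio_le (hC1 : ContDiff ℝ 1 u) (hper : Function.Periodic u 1)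
    (hinj : ∀ x y, u x = u y → (x : AddCircle (1 : ℝ)) = y) (hreg : ∀ x, deriv u x ≠ 0) :
    ∃ K : ℝ, ∀ y h, |h| ≤ 1 / 2 → ENNReal.ofReal (tangentPointRatio u (y + h) y) ≤
      ENNReal.ofReal K * ∫⁻ s in Ioc (0 : ℝ) 1,
        ENNReal.ofReal s * ENNReal.ofReal (circSlope (unitTangent u) (y + s * h) y) := by
  obtain ⟨K, hK, hle⟩ := exists_tangentPointRatio_le hC1 hper hinj hreg
  refine ⟨K, fun y h hh => ?_⟩
  have := continuous_unitTangent hC1 hreg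
  have hslope : ∀ s ∈ Ioc (0 : ℝ) 1,
      ENNReal.ofReal (‖unitTangent u (y + s * h) - unitTangent u y‖ / |h|) =
        ENNReal.ofReal s * ENNReal.ofReal (circSlope (unitTangent u) (y + s * h) y) := by
    rintro s ⟨hs₀, hs₁⟩
    have hsh : |s * h| ≤ 1 / 2 := by
      rw [abs_mul, abs_of_pos hs₀]
      exact (mul_le_of_le_one_left (abs_nonneg h) hs₁).trans hh
    rw [← ENNReal.ofReal_mul hs₀.le, circSlope_add_left _ hsh, abs_mul, abs_of_pos hs₀,
      mul_div_assoc', mul_div_mul_left _ _ hs₀.ne']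
  calc ENNReal.ofReal (tangentPointRatio u (y + h) y)
      ≤ ENNReal.ofReal
          (K * ∫ s in (0 : ℝ)..1, ‖unitTangent u (y + s * h) - unitTangent u y‖ / |h|) :=
        ENNReal.ofReal_le_ofReal (hle y h hh)
    _ = ENNReal.ofReal K * ∫⁻ s in Ioc (0 : ℝ) 1,
          ENNReal.ofReal (‖unitTangent u (y + s * h) - unitTangent u y‖ / |h|) := by
        rw [ENNReal.ofReal_mul hK, intervalIntegral.integral_of_le zero_le_one,
          ofReal_integral_eq_lintegral_ofReal (Continuous.integrableOn_Ioc (by fun_prop))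
            (ae_of_all _ fun s => by positivity)]
    _ = _ := by rw [setLIntegral_congr_fun measurableSet_Ioc hslope]

lemma exists_setLIntegral_Ioc_tangentPointRatio_rpow_le (hC1 : ContDiff ℝ 1 u)
    (hper : Function.Periodic u 1) (hinj : ∀ x y, u x = u y → (x : AddCircle (1 : ℝ)) = y)
    (hreg : ∀ x, deriv u x ≠ 0) {q : ℝ} (hq : 1 ≤ q) :
    ∃ K : ℝ, ∀ y, ∫⁻ h in Ioc (-(1 / 2) : ℝ) (1 / 2),
        ENNReal.ofReal (tangentPointRatio u (y + h) y) ^ q ≤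
      ENNReal.ofReal K ^ q * ∫⁻ k in Ioc (-(1 / 2) : ℝ) (1 / 2),
        ENNReal.ofReal (circSlope (unitTangent u) (y + k) y) ^ q := by
  have hq₀ : 0 ≤ q := zero_le_one.trans hq
  obtain ⟨K, hle⟩ := exists_ofReal_tangentPointRatio_le hC1 hper hinj hreg
  refine ⟨K, fun y => ?_⟩
  set φ : ℝ → ℝ≥0∞ := fun k => ENNReal.ofReal (circSlope (unitTangent u) (y + k) y)
  have hφ : Measurable φ := ((measurable_circSlope (continuous_unitTangent hC1 hreg)).comp
    (f := fun k : ℝ => (y + k, y)) (by fun_prop)).ennreal_ofReal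
  calc ∫⁻ h in Ioc (-(1 / 2) : ℝ) (1 / 2), ENNReal.ofReal (tangentPointRatio u (y + h) y) ^ q
      ≤ ∫⁻ h in Ioc (-(1 / 2) : ℝ) (1 / 2), ENNReal.ofReal K ^ q *
          (∫⁻ s in Ioc (0 : ℝ) 1, ENNReal.ofReal s * φ (s * h)) ^ q := by
        refine setLIntegral_mono' measurableSet_Ioc fun h hh => ?_
        rw [← ENNReal.mul_rpow_of_nonneg _ _ hq₀]
        gcongr
        exact hle y h (abs_le.2 ⟨hh.1.le, hh.2⟩)
    _ = ENNReal.ofReal K ^ q * ∫⁻ h in Ioc (-(1 / 2) : ℝ) (1 / 2),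
          (∫⁻ s in Ioc (0 : ℝ) 1, ENNReal.ofReal s * φ (s * h)) ^ q :=
        lintegral_const_mul' _ _ (ENNReal.rpow_ne_top_of_nonneg hq₀ ENNReal.ofReal_ne_top)
    _ ≤ ENNReal.ofReal K ^ q * ∫⁻ k in Ioc (-(1 / 2) : ℝ) (1 / 2), φ k ^ q :=
        mul_le_mul' le_rfl (setLIntegral_rpow_dilation_average_le hφ hq _)

lemma exists_setLIntegral_unitSq_tangentPointRatio_rpow_le (hC1 : ContDiff ℝ 1 u)
    (hper : Function.Periodic u 1) (hinj : ∀ x y, u x = u y → (x : AddCircle (1 : ℝ)) = y)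
    (hreg : ∀ x, deriv u x ≠ 0) {q : ℝ} (hq : 1 ≤ q) :
    ∃ K : ℝ, ∫⁻ z in unitSq, ENNReal.ofReal (tangentPointRatio u z.1 z.2) ^ q ≤
      ENNReal.ofReal K ^ q *
        ∫⁻ z in unitSq, ENNReal.ofReal (circSlope (unitTangent u) z.1 z.2) ^ q := by
  have hq₀ : 0 ≤ q := zero_le_one.trans hq
  obtain ⟨K, hle⟩ := exists_setLIntegral_Ioc_tangentPointRatio_rpow_le hC1 hper hinj hreg hq
  have := measurable_tangentPointRatio hC1
  have := measurable_circSlope (continuous_unitTangent hC1 hreg)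
  refine ⟨K, ?_⟩
  rw [setLIntegral_unitSq_eq_of_periodic
      (f := fun x y => ENNReal.ofReal (tangentPointRatio u x y) ^ q) (by fun_prop)
      fun y => (periodic_tangentPointRatio_left hper y).comp (ENNReal.ofReal · ^ q),
    setLIntegral_unitSq_eq_of_periodic
      (f := fun x y => ENNReal.ofReal (circSlope (unitTangent u) x y) ^ q) (by fun_prop)
      fun y => (periodic_circSlope_left (periodic_unitTangent hper) y).comp
        (ENNReal.ofReal · ^ q),
    ← lintegral_const_mul' _ _ (ENNReal.rpow_ne_top_of_nonneg hq₀ ENNReal.ofReal_ne_top)]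
  exact lintegral_mono hle

lemma memLp_tangentPointRatio (hC1 : ContDiff ℝ 1 u) (hper : Function.Periodic u 1)
    (hinj : ∀ x y, u x = u y → (x : AddCircle (1 : ℝ)) = y) (hreg : ∀ x, deriv u x ≠ 0)
    {q : ℝ} (hq : 1 ≤ q)
    (hT : MemLp (fun z : ℝ × ℝ => circSlope (unitTangent u) z.1 z.2) (ENNReal.ofReal q)
      (volume.restrict unitSq)) :
    MemLp (fun z : ℝ × ℝ => tangentPointRatio u z.1 z.2) (ENNReal.ofReal q)
      (volume.restrict unitSq) := by
  have hq₀ : 0 < q := one_pos.trans_le hq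
  obtain ⟨K, hle⟩ := exists_setLIntegral_unitSq_tangentPointRatio_rpow_le hC1 hper hinj hreg hq
  rw [memLp_iff_lintegral_ofReal_rpow_lt_top hT.1 (fun _ => circSlope_nonneg _ _ _) hq₀] at hT
  rw [memLp_iff_lintegral_ofReal_rpow_lt_top (measurable_tangentPointRatio hC1).aestronglyMeasurable
    (fun _ => tangentPointRatio_nonneg _ _ _) hq₀]
  simp only [ENNReal.ofReal_rpow_of_nonneg (tangentPointRatio_nonneg _ _ _) hq₀.le,
    ENNReal.ofReal_rpow_of_nonneg (circSlope_nonneg _ _ _) hq₀.le] at hle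
  exact hle.trans_lt (ENNReal.mul_lt_top
    (ENNReal.rpow_lt_top_of_nonneg hq₀.le ENNReal.ofReal_ne_top) hT)

theorem tp_finite_iff_unit_tangent_sobolev_general {q : ℝ} (hq : 1 ≤ q) (hC1 : ContDiff ℝ 1 u)
    (hper : Function.Periodic u 1) (hinj : ∀ x y, u x = u y → (x : AddCircle (1 : ℝ)) = y)
    (hreg : ∀ x, deriv u x ≠ 0) :
    MemLp (fun z : ℝ × ℝ => tangentPointRatio u z.1 z.2) (ENNReal.ofReal q)
        (volume.restrict unitSq) ↔
      MemLp (fun z : ℝ × ℝ => circSlope (unitTangent u) z.1 z.2) (ENNReal.ofReal q)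
        (volume.restrict unitSq) :=
  ⟨memLp_circSlope_unitTangent hC1 hper hreg, memLp_tangentPointRatio hC1 hper hinj hreg hq⟩

end Equivalence

section Euclidean

variable {n : ℕ}

lemma wedgeSq_eq_wedgeNorm_sq (a b : EuclideanSpace ℝ (Fin n)) :
    wedgeSq a b = wedgeNorm a b ^ 2 :=
  (wedgeNorm_sq a b).symm

lemma wedgeSq_rpow_div_norm_rpow (u : ℝ → EuclideanSpace ℝ (Fin n)) (x y q : ℝ) :
    wedgeSq (deriv u y) (u x - u y) ^ (q / 2) / ‖u x - u y‖ ^ (2 * q) =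
      tangentPointRatio u x y ^ q := by
  rw [wedgeSq_eq_wedgeNorm_sq, tangentPointRatio,
    Real.div_rpow (wedgeNorm_nonneg _ _) (sq_nonneg _), ← Real.rpow_natCast_mul (norm_nonneg _),
    ← Real.rpow_natCast_mul (wedgeNorm_nonneg _ _), Nat.cast_ofNat, mul_div_cancel₀ q two_ne_zero]

lemma TPe_lt_top_iff_memLp {u : ℝ → EuclideanSpace ℝ (Fin n)} (hC1 : ContDiff ℝ 1 u) {q : ℝ}
    (hq : 0 < q) :
    TPe q u < ⊤ ↔ MemLp (fun z : ℝ × ℝ => tangentPointRatio u z.1 z.2) (ENNReal.ofReal q)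
      (volume.restrict unitSq) := by
  have hfactor : ENNReal.ofReal (1 / q) ≠ 0 := (ENNReal.ofReal_pos.2 (one_div_pos.2 hq)).ne'
  rw [memLp_iff_lintegral_ofReal_rpow_lt_top (measurable_tangentPointRatio hC1).aestronglyMeasurable
    (fun _ => tangentPointRatio_nonneg _ _ _) hq, TPe]
  simp only [wedgeSq_rpow_div_norm_rpow, ENNReal.mul_lt_top_iff, ENNReal.ofReal_lt_top, hfactor,
    true_and, false_or]
  exact or_iff_left_of_imp fun h => h ▸ ENNReal.zero_lt_top

lemma sobSemPow_lt_top_iff_memLp {f : ℝ → EuclideanSpace ℝ (Fin n)} (hf : Continuous f) {q : ℝ}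
    (hq : 0 < q) :
    sobSemPow (1 - 1 / q) q f < ⊤ ↔ MemLp (fun z : ℝ × ℝ => circSlope f z.1 z.2)
      (ENNReal.ofReal q) (volume.restrict unitSq) := by
  have hexp : 1 + (1 - 1 / q) * q = q := by field_simp; ring
  rw [memLp_iff_lintegral_ofReal_rpow_lt_top (measurable_circSlope hf).aestronglyMeasurable
    (fun _ => circSlope_nonneg _ _ _) hq, sobSemPow, hexp]
  simp only [circSlope, Real.div_rpow (norm_nonneg _) (norm_nonneg _), circDist]

lemma Regular.deriv_ne_zero {u : ℝ → EuclideanSpace ℝ (Fin n)} (hreg : Regular u) (x : ℝ) :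
    deriv u x ≠ 0 :=
  norm_pos_iff.1 (hreg.trans_le (ciInf_le ⟨0, forall_mem_range.2 fun _ => norm_nonneg _⟩ x))

end Euclidean

/-- Characterization of the energy space: for an embedded regular
`C¹` curve, `TP(u) < ∞` if and only if `u'/|u'| ∈ W^{1-1/q,q}(ℝ/ℤ, ℝⁿ)`. -/
theorem tp_finite_iff_unit_tangent_sobolev (n : ℕ) (q : ℝ) (hq : 2 < q)
    (u : ℝ → EuclideanSpace ℝ (Fin n))
    (hC1 : ContDiff ℝ 1 u) (hper : Function.Periodic u 1)
    (hemb : Embedded u) (hreg : Regular u) :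
    TPe q u < ⊤ ↔
      sobSemPow (1 - 1 / q) q (fun x => ‖deriv u x‖⁻¹ • deriv u x) < ⊤ := by
  have hT : Continuous (unitTangent u) := continuous_unitTangent hC1 hreg.deriv_ne_zero
  exact (TPe_lt_top_iff_memLp hC1 (by linarith)).trans <|
    (tp_finite_iff_unit_tangent_sobolev_general (by linarith) hC1 hper hemb
      hreg.deriv_ne_zero).trans (sobSemPow_lt_top_iff_memLp hT (by linarith)).symm
end
end

section
/- Let q > 2 and λ, Λ, M > 0. There is a constant C = C(λ, Λ, M, n, q) > 0 such that every embedded, regular C¹ curve u : ℝ/ℤ → ℝⁿ with [u']_{W^{1-1/q,q}} < ∞, with λ ≤ |u'(x)| ≤ Λ for all x, and with TP(u) ≤ M satisfies |x−y|_{ℝ/ℤ} ≤ C |u(x) − u(y)| for all x, y ∈ ℝ/ℤ; in particular bil(u) ≤ C. -/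
open MeasureTheory Set Filter
open scoped RealInnerProductSpace ENNReal Topology

noncomputable section

/-! For fixed `x`, the tangent-point integrand at `(x, y)` is `|∂σ/∂y|^q`, where `σ` is the unit
vector pointing from `u x` to `u y`. If the density at `x` (the integral over `y`) is at most
`A / r`, Hölder's inequality bounds the oscillation of `σ` along an arc of length `r` by
`A ^ (1/q) * r ^ (1 - 2/q)`, which is small for small `r` because `q > 2`. Letting `y → x`, the
unit tangents at two points of small density at distance at most `r` are close. By Markov's
inequality the other points of an arc of length `r` occupy only a small proportion of it, so on
each short arc `u` advances in a fixed direction at a rate comparable to `lam`. This is the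
estimate for nearby points.

If distant points `x`, `y` had images at a distance much smaller than `r`, a point of small
density close to `x` would see the arc of length `r` around `y` pass by at a distance much smaller
than `r`. Its secant direction would turn by a fixed amount along that arc, contradicting the
Hölder bound. -/

open NormedSpace

section Normalize

variable {E : Type*} [NormedAddCommGroup E] [InnerProductSpace ℝ E]

/-- The squared norm `|a ∧ b|²` in an arbitrary real inner product space; on Euclidean space this
is `wedgeSq`. -/
def wedgeNormSq (a b : E) : ℝ :=
  ‖a‖ ^ 2 * ‖b‖ ^ 2 - ⟪a, b⟫ ^ 2

lemma wedgeNormSq_neg_right (a b : E) : wedgeNormSq a (-b) = wedgeNormSq a b := by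
  simp only [wedgeNormSq, norm_neg, inner_neg_right, neg_sq]

lemma hasDerivAt_normalize {w : ℝ → E} {w' : E} {t : ℝ} (hw : HasDerivAt w w' t) (h : w t ≠ 0) :
    HasDerivAt (fun y => normalize (w y)) (‖w t‖⁻¹ • w' - (⟪w t, w'⟫ / ‖w t‖ ^ 3) • w t) t := by
  have h0 : ‖w t‖ ≠ 0 := norm_ne_zero_iff.2 h
  have hnorm := hw.norm_sq.sqrt (by positivity)
  simp only [Real.sqrt_sq (norm_nonneg _)] at hnorm
  refine ((hnorm.inv h0).smul hw).congr_deriv ?_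
  rw [sub_eq_add_neg, ← neg_smul]
  congr 2
  field_simp

lemma wedgeNormSq_eq_norm_deriv_normalize {w : ℝ → E} {t : ℝ} (hw : DifferentiableAt ℝ w t)
    (h : w t ≠ 0) :
    wedgeNormSq (deriv w t) (w t) = (‖deriv (fun y => normalize (w y)) t‖ * ‖w t‖ ^ 2) ^ 2 := by
  have h0 : ‖w t‖ ≠ 0 := norm_ne_zero_iff.2 h
  rw [(hasDerivAt_normalize hw.hasDerivAt h).deriv, mul_pow, norm_sub_sq_real, norm_smul,
    norm_smul, real_inner_smul_left, real_inner_smul_right, mul_pow, mul_pow, Real.norm_eq_abs,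
    Real.norm_eq_abs, sq_abs, sq_abs, wedgeNormSq, real_inner_comm (w t)]
  field_simp
  ring

lemma enorm_rpow_deriv_normalize {q : ℝ} (hq : 0 ≤ q) {w : ℝ → E} {t : ℝ}
    (hw : DifferentiableAt ℝ w t) (h : w t ≠ 0) :
    ‖deriv (fun y => normalize (w y)) t‖ₑ ^ q =
      ENNReal.ofReal (wedgeNormSq (deriv w t) (w t) ^ (q / 2) / ‖w t‖ ^ (2 * q)) := by
  have hpos : 0 < ‖w t‖ := norm_pos_iff.2 h
  rw [wedgeNormSq_eq_norm_deriv_normalize hw h, ← ofReal_norm,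
    ENNReal.ofReal_rpow_of_nonneg (norm_nonneg _) hq, ← Real.rpow_natCast (_ * _) 2,
    ← Real.rpow_mul (by positivity), Nat.cast_two, mul_div_cancel₀ q two_ne_zero,
    Real.mul_rpow (by positivity) (by positivity), ← Real.rpow_natCast ‖w t‖ 2,
    ← Real.rpow_mul hpos.le, Nat.cast_two, mul_div_cancel_right₀ _ (by positivity)]

lemma contDiffOn_normalize {w : ℝ → E} {s : Set ℝ} (hw : ContDiffOn ℝ 1 w s)
    (h : ∀ t ∈ s, w t ≠ 0) : ContDiffOn ℝ 1 (fun y => normalize (w y)) s :=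
  ((hw.norm ℝ h).inv fun t ht => norm_ne_zero_iff.2 (h t ht)).smul hw

lemma div_le_inner_normalize {e v : E} {m R : ℝ} (hm : 0 < m) (hR : ‖v‖ ≤ R) (hv : m ≤ ⟪e, v⟫) :
    m / R ≤ ⟪e, normalize v⟫ := by
  have hv0 : 0 < ‖v‖ := by
    refine norm_pos_iff.2 fun h => ?_
    rw [h, inner_zero_right] at hv
    exact hm.not_ge hv
  rw [NormedSpace.normalize, real_inner_smul_right, inv_mul_eq_div]
  exact div_le_div₀ (hm.le.trans hv) hv hv0 hR

lemma two_mul_div_le_norm_normalize_sub {e v₁ v₂ : E} {m R : ℝ} (he : ‖e‖ = 1) (hm : 0 < m)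
    (hR₁ : ‖v₁‖ ≤ R) (hR₂ : ‖v₂‖ ≤ R) (hv₁ : m ≤ ⟪e, v₁⟫) (hv₂ : m ≤ ⟪e, -v₂⟫) :
    2 * (m / R) ≤ ‖normalize v₁ - normalize v₂‖ := by
  have h₁ := div_le_inner_normalize hm hR₁ hv₁
  have h₂ := div_le_inner_normalize hm ((norm_neg v₂).trans_le hR₂) hv₂
  calc 2 * (m / R) = m / R + m / R := two_mul _
    _ ≤ ⟪e, normalize v₁⟫ + ⟪e, normalize (-v₂)⟫ := add_le_add h₁ h₂
    _ = ⟪e, normalize v₁ - normalize v₂⟫ := by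
      rw [normalize_neg, ← inner_add_right, sub_eq_add_neg]
    _ ≤ ‖e‖ * ‖normalize v₁ - normalize v₂‖ := real_inner_le_norm _ _
    _ = ‖normalize v₁ - normalize v₂‖ := by rw [he, one_mul]

lemma half_le_inner_of_norm_sub_le_one {a b : E} (ha : ‖a‖ = 1) (hb : ‖b‖ = 1)
    (hab : ‖a - b‖ ≤ 1) : 1 / 2 ≤ ⟪a, b⟫ := by
  have h := norm_sub_sq_real a b
  rw [ha, hb] at h
  nlinarith [norm_nonneg (a - b)]

lemma tendsto_normalize_sub_right {u : ℝ → E} {x : ℝ} (hu : DifferentiableAt ℝ u x)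
    (hd : deriv u x ≠ 0) :
    Tendsto (fun y => normalize (u y - u x)) (𝓝[>] x) (𝓝 (normalize (deriv u x))) := by
  have hslope := hu.hasDerivAt.tendsto_slope.mono_left (nhdsGT_le_nhdsNE x)
  refine ((hslope.norm.inv₀ (norm_ne_zero_iff.2 hd)).smul hslope).congr' ?_
  filter_upwards [self_mem_nhdsWithin] with y hy
  rw [slope_def_module]
  exact normalize_smul_of_pos (inv_pos.2 (sub_pos.2 hy)) _

lemma tendsto_normalize_sub_left {u : ℝ → E} {x : ℝ} (hu : DifferentiableAt ℝ u x)
    (hd : deriv u x ≠ 0) :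
    Tendsto (fun y => normalize (u y - u x)) (𝓝[<] x) (𝓝 (-normalize (deriv u x))) := by
  have hslope := hu.hasDerivAt.tendsto_slope.mono_left (nhdsLT_le_nhdsNE x)
  refine ((hslope.norm.inv₀ (norm_ne_zero_iff.2 hd)).smul hslope).neg.congr' ?_
  filter_upwards [self_mem_nhdsWithin] with y hy
  rw [slope_def_module, neg_eq_iff_eq_neg]
  exact normalize_smul_of_neg (inv_lt_zero.2 (sub_neg.2 hy)) _

end Normalize

section Integrals

lemma enorm_sub_le_lintegral_deriv_rpow {F : Type*} [NormedAddCommGroup F] [NormedSpace ℝ F]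
    {f : ℝ → F} {q a b : ℝ} (hq : 1 ≤ q) (hab : a ≤ b) (hf : ContDiffOn ℝ 1 f (Icc a b)) :
    ‖f b - f a‖ₑ ≤
      (∫⁻ y in Ioc a b, ‖deriv f y‖ₑ ^ q) ^ (1 / q) * ENNReal.ofReal (b - a) ^ (1 - 1 / q) := by
  have hmeas : AEStronglyMeasurable (deriv f) (volume.restrict (Ioc a b)) := by
    rw [← restrict_Ioo_eq_restrict_Ioc]
    exact ((hf.mono Ioo_subset_Icc_self).continuousOn_deriv_of_isOpen isOpen_Ioo
      le_rfl).aestronglyMeasurable measurableSet_Ioo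
  calc ‖f b - f a‖ₑ ≤ ∫⁻ y in Ioc a b, ‖deriv f y‖ₑ := by
        rw [restrict_Ioc_eq_restrict_Icc]
        exact enorm_sub_le_lintegral_deriv_of_contDiffOn_Icc hf hab
    _ ≤ _ := by
        simpa [eLpNorm'] using eLpNorm'_le_eLpNorm'_mul_rpow_measure_univ one_pos hq hmeas

lemma setLIntegral_Ioc_add_eq_of_periodic {f : ℝ → ℝ≥0∞} {T : ℝ} (hf : Function.Periodic f T)
    (hT : 0 < T) (a b : ℝ) : ∫⁻ y in Ioc a (a + T), f y = ∫⁻ y in Ioc b (b + T), f y := by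
  refine (isAddFundamentalDomain_Ioc hT a).setLIntegral_eq (isAddFundamentalDomain_Ioc hT b) f ?_
  rintro ⟨g, hg⟩ x
  obtain ⟨k, rfl⟩ := AddSubgroup.mem_zmultiples_iff.1 hg
  rw [AddSubgroup.vadd_def, vadd_eq_add, add_comm]
  exact hf.zsmul k x

lemma setLIntegral_Ioc_le_of_periodic {f : ℝ → ℝ≥0∞} {T : ℝ} (hf : Function.Periodic f T)
    (hT : 0 < T) {a b : ℝ} (hab : b ≤ a + T) :
    ∫⁻ y in Ioc a b, f y ≤ ∫⁻ y in Ioc 0 T, f y :=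
  calc ∫⁻ y in Ioc a b, f y ≤ ∫⁻ y in Ioc a (a + T), f y :=
        lintegral_mono_set (Ioc_subset_Ioc_right hab)
    _ = ∫⁻ y in Ioc 0 T, f y := by rw [setLIntegral_Ioc_add_eq_of_periodic hf hT a 0, zero_add]

lemma mul_sub_sub_le_image_sub {f : ℝ → ℝ} (hf : ContDiff ℝ 1 f) {S : Set ℝ}
    (hS : MeasurableSet S) {a b c L ε : ℝ} (hab : a ≤ b) (hcL : 0 ≤ c + L)
    (hc : ∀ x ∈ Ioc a b, x ∉ S → c ≤ deriv f x) (hL : ∀ x, -L ≤ deriv f x)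
    (hε : volume.real (S ∩ Ioc a b) ≤ ε) : c * (b - a) - (c + L) * ε ≤ f b - f a := by
  have hcont : Continuous (deriv f) := hf.continuous_deriv le_rfl
  have hind : IntegrableOn (S.indicator fun _ => c + L) (Ioc a b) :=
    (integrableOn_const (by simp)).indicator hS
  have hconst : IntegrableOn (fun _ => c) (Ioc a b) := integrableOn_const (by simp)
  calc c * (b - a) - (c + L) * ε
      ≤ c * (b - a) - (c + L) * volume.real (S ∩ Ioc a b) := by gcongr
    _ = ∫ x in Ioc a b, (c - S.indicator (fun _ => c + L) x) := by
      rw [integral_sub hconst hind, integral_indicator hS, Measure.restrict_restrict hS,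
        setIntegral_const, setIntegral_const, Real.volume_real_Ioc_of_le hab, smul_eq_mul,
        smul_eq_mul, mul_comm c, mul_comm (c + L)]
    _ ≤ ∫ x in Ioc a b, deriv f x := by
      refine setIntegral_mono_on (hconst.sub hind)
        (hcont.integrableOn_Ioc) measurableSet_Ioc fun x hx => ?_
      by_cases hxS : x ∈ S
      · rw [indicator_of_mem hxS]
        linarith [hL x]
      · rw [indicator_of_notMem hxS, sub_zero]
        exact hc x hx hxS
    _ = f b - f a := by
      rw [← intervalIntegral.integral_of_le hab]
      exact intervalIntegral.integral_deriv_eq_sub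
        (fun x _ => hf.differentiable one_ne_zero x) (hcont.intervalIntegrable _ _)

end Integrals

section Loops

variable {E : Type*} [NormedAddCommGroup E] {u : ℝ → E}

/-- An embedded closed `C¹` curve, given by its `1`-periodic lift to `ℝ`. -/
structure IsEmbeddedLoop [NormedSpace ℝ E] (u : ℝ → E) : Prop where
  contDiff : ContDiff ℝ 1 u
  periodic : Function.Periodic u 1
  coe_eq_coe : ∀ x y : ℝ, u x = u y → (x : AddCircle (1 : ℝ)) = y

lemma IsEmbeddedLoop.ne_of_lt [NormedSpace ℝ E] (hu : IsEmbeddedLoop u) {x y : ℝ} (hxy : x < y)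
    (hyx : y < x + 1) : u x ≠ u y := fun h =>
  have : Fact ((0 : ℝ) < 1) := ⟨one_pos⟩
  hxy.ne ((AddCircle.coe_eq_coe_iff_of_mem_Ico (a := x) ⟨le_rfl, by linarith⟩
    ⟨hxy.le, hyx⟩).1 (hu.coe_eq_coe x y h))

lemma IsEmbeddedLoop.ne_of_abs_sub_lt_one [NormedSpace ℝ E] (hu : IsEmbeddedLoop u) {x y : ℝ}
    (hne : x ≠ y) (hxy : |x - y| < 1) : u x ≠ u y := by
  obtain ⟨hlower, hupper⟩ := abs_lt.1 hxy
  rcases hne.lt_or_gt with hlt | hgt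
  · exact hu.ne_of_lt hlt (by linarith)
  · exact (hu.ne_of_lt hgt (by linarith)).symm

lemma periodic_deriv_s6 [NormedSpace ℝ E] {T : ℝ} (hu : Function.Periodic u T) :
    Function.Periodic (deriv u) T := fun x => by
  rw [← deriv_comp_add_const, funext hu]

lemma norm_sub_le_mul_abs_sub [NormedSpace ℝ E] {Λ : ℝ} (hu : Differentiable ℝ u)
    (hL : ∀ x, ‖deriv u x‖ ≤ Λ) (a b : ℝ) : ‖u a - u b‖ ≤ Λ * |a - b| :=
  convex_univ.norm_image_sub_le_of_norm_deriv_le (fun x _ => hu x) (fun x _ => hL x)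
    (mem_univ b) (mem_univ a)

lemma circDist_le_of_abs_sub_le_half {C : ℝ} (hper : Function.Periodic u 1)
    (h : ∀ x y : ℝ, |x - y| ≤ 1 / 2 → |x - y| ≤ C * ‖u x - u y‖) (x y : ℝ) :
    circDist x y ≤ C * ‖u x - u y‖ := by
  have hdist : circDist x y = |x - round (x - y) - y| := by
    rw [circDist, AddCircle.norm_eq, inv_one, one_mul, mul_one, sub_right_comm]
  have hx : u (x - round (x - y)) = u x := by
    simpa using hper.sub_zsmul_eq (x := x) (round (x - y))
  rw [hdist, ← hx]
  refine h _ _ ?_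
  rw [sub_right_comm]
  exact abs_sub_round _

lemma bil_le_ofReal {n : ℕ} {C : ℝ} {u : ℝ → EuclideanSpace ℝ (Fin n)}
    (h : ∀ x y : ℝ, circDist x y ≤ C * ‖u x - u y‖) : bil u ≤ ENNReal.ofReal C := by
  refine iSup_le fun x => iSup_le fun y => iSup_le fun hxy => ?_
  have hpos : 0 < circDist x y := lt_of_le_of_ne (norm_nonneg _) hxy.symm
  have hu : 0 < ‖u x - u y‖ := by
    refine (norm_nonneg _).lt_of_ne fun h0 => hpos.not_ge ?_
    simpa [← h0] using h x y
  rw [← ENNReal.ofReal_div_of_pos hu]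
  exact ENNReal.ofReal_le_ofReal ((div_le_iff₀ hu).2 (h x y))

end Loops

section TangentPoint

variable {E : Type*} [NormedAddCommGroup E] [InnerProductSpace ℝ E] {u : ℝ → E}
  {q A lam Λ : ℝ}

/-- The integrand of the tangent-point functional, for curves in an inner product space. -/
def tangentPointIntegrand (q : ℝ) (u : ℝ → E) (x y : ℝ) : ℝ≥0∞ :=
  ENNReal.ofReal (wedgeNormSq (deriv u y) (u x - u y) ^ (q / 2) / ‖u x - u y‖ ^ (2 * q))

/-- The tangent-point functional `TPe`, for curves in an inner product space. -/
def tangentPointEnergy (q : ℝ) (u : ℝ → E) : ℝ≥0∞ :=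
  ENNReal.ofReal (1 / q) * ∫⁻ p in unitSq, tangentPointIntegrand q u p.1 p.2

/-- The tangent-point energy density at `x`: the integral of the integrand over the second
variable. -/
def tangentPointDensity (q : ℝ) (u : ℝ → E) (x : ℝ) : ℝ≥0∞ :=
  ∫⁻ y in Ioc (0 : ℝ) 1, tangentPointIntegrand q u x y

lemma measurable_tangentPointIntegrand (q : ℝ) (hu : ContDiff ℝ 1 u) :
    Measurable (Function.uncurry (tangentPointIntegrand q u)) := by
  have hu0 : Continuous u := hu.continuous
  have hnum : Continuous fun p : ℝ × ℝ => wedgeNormSq (deriv u p.2) (u p.1 - u p.2) := by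
    unfold wedgeNormSq
    fun_prop
  have hden : Continuous fun p : ℝ × ℝ => ‖u p.1 - u p.2‖ := by fun_prop
  exact ((hnum.measurable.pow_const _).div (hden.measurable.pow_const _)).ennreal_ofReal

lemma measurable_tangentPointDensity (q : ℝ) (hu : ContDiff ℝ 1 u) :
    Measurable (tangentPointDensity q u) :=
  (measurable_tangentPointIntegrand q hu).lintegral_prod_right'

lemma lintegral_tangentPointDensity (hq : 0 < q) (hu : ContDiff ℝ 1 u) :
    ∫⁻ x in Ioc (0 : ℝ) 1, tangentPointDensity q u x =
      ENNReal.ofReal q * tangentPointEnergy q u := by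
  have htonelli := setLIntegral_prod (μ := volume) (ν := volume) (s := Ioc (0 : ℝ) 1)
    (t := Ioc (0 : ℝ) 1) _ (measurable_tangentPointIntegrand q hu).aemeasurable
  rw [tangentPointEnergy, ← mul_assoc, ← ENNReal.ofReal_mul hq.le, mul_one_div_cancel hq.ne',
    ENNReal.ofReal_one, one_mul]
  exact htonelli.symm

lemma setLIntegral_tangentPointDensity_le (hper : Function.Periodic u 1)
    (hE : ∫⁻ x in Ioc (0 : ℝ) 1, tangentPointDensity q u x ≤ ENNReal.ofReal A) {a b : ℝ}
    (hba : b ≤ a + 1) : ∫⁻ x in Ioc a b, tangentPointDensity q u x ≤ ENNReal.ofReal A := by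
  refine (setLIntegral_Ioc_le_of_periodic (fun x => ?_) one_pos hba).trans hE
  simp only [tangentPointDensity, tangentPointIntegrand, hper x]

lemma setLIntegral_tangentPointIntegrand_le (hper : Function.Periodic u 1) (x : ℝ) {a b : ℝ}
    (hba : b ≤ a + 1) :
    ∫⁻ y in Ioc a b, tangentPointIntegrand q u x y ≤ tangentPointDensity q u x := by
  refine setLIntegral_Ioc_le_of_periodic (fun y => ?_) one_pos hba
  simp only [tangentPointIntegrand, hper y, periodic_deriv_s6 hper y]

lemma exists_tangentPointDensity_le (hu : ContDiff ℝ 1 u) (hper : Function.Periodic u 1)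
    (hE : ∫⁻ x in Ioc (0 : ℝ) 1, tangentPointDensity q u x ≤ ENNReal.ofReal A) {a b : ℝ}
    (hab : a < b) (hba : b ≤ a + 1) :
    ∃ w ∈ Ioc a b, tangentPointDensity q u w ≤ ENNReal.ofReal (A / (b - a)) := by
  obtain ⟨w, hw, h⟩ := exists_le_setLAverage (μ := volume) (s := Ioc a b) (by simpa using hab)
    (by simp) (measurable_tangentPointDensity q hu).aemeasurable
  refine ⟨w, hw, h.trans ?_⟩
  rw [setLAverage_eq, Real.volume_Ioc, ENNReal.ofReal_div_of_pos (sub_pos.2 hab)]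
  gcongr
  exact setLIntegral_tangentPointDensity_le hper hE hba

lemma volume_lt_tangentPointDensity_le (hu : ContDiff ℝ 1 u) (hper : Function.Periodic u 1)
    (hA : 0 ≤ A) (hE : ∫⁻ x in Ioc (0 : ℝ) 1, tangentPointDensity q u x ≤ ENNReal.ofReal A)
    {a b B : ℝ} (hB : 0 < B) (hba : b ≤ a + 1) :
    volume.real ({x | ENNReal.ofReal B < tangentPointDensity q u x} ∩ Ioc a b) ≤ A / B := by
  have hmeas := measurable_tangentPointDensity q hu
  refine ENNReal.toReal_le_of_le_ofReal (by positivity) ?_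
  calc volume ({x | ENNReal.ofReal B < tangentPointDensity q u x} ∩ Ioc a b)
      ≤ volume.restrict (Ioc a b) {x | ENNReal.ofReal B ≤ tangentPointDensity q u x} := by
        rw [Measure.restrict_apply (measurableSet_le measurable_const hmeas)]
        gcongr with x
        exact le_of_lt
    _ ≤ (∫⁻ x in Ioc a b, tangentPointDensity q u x) / ENNReal.ofReal B :=
        meas_ge_le_lintegral_div hmeas.aemeasurable (by simpa using hB) ENNReal.ofReal_ne_top
    _ ≤ ENNReal.ofReal (A / B) := by
        rw [ENNReal.ofReal_div_of_pos hB]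
        gcongr
        exact setLIntegral_tangentPointDensity_le hper hE hba

/-- The bound `A ^ (1/q) * r ^ (1 - 2/q)` for the oscillation, along an arc of length at most `r`,
of the secant direction seen from a point of the curve with density at most `A / r`. -/
def oscBound (q A r : ℝ) : ℝ := A ^ (1 / q) * r ^ (1 - 2 / q)

lemma oscBound_nonneg {r : ℝ} (hA : 0 ≤ A) (hr : 0 ≤ r) : 0 ≤ oscBound q A r :=
  mul_nonneg (Real.rpow_nonneg hA _) (Real.rpow_nonneg hr _)

lemma oscBound_le_oscBound {r s : ℝ} (hq : 2 ≤ q) (hA : 0 ≤ A) (hr : 0 ≤ r) (hrs : r ≤ s) :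
    oscBound q A r ≤ oscBound q A s := by
  have hexp : 0 ≤ 1 - 2 / q := sub_nonneg.2 ((div_le_one (by linarith)).2 hq)
  unfold oscBound
  gcongr

lemma exists_oscBound_lt (hq : 2 < q) (A : ℝ) {ε δ₀ : ℝ} (hε : 0 < ε) (hδ₀ : 0 < δ₀) :
    ∃ δ, 0 < δ ∧ δ ≤ δ₀ ∧ oscBound q A δ < ε := by
  have hexp : 0 < 1 - 2 / q := sub_pos.2 ((div_lt_one (by linarith)).2 hq)
  have htendsto : Tendsto (oscBound q A) (𝓝[>] 0) (𝓝 0) := by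
    have h := ((Real.continuousAt_rpow_const 0 _ (Or.inr hexp.le)).const_mul
      (A ^ (1 / q))).tendsto.mono_left (nhdsWithin_le_nhds (s := Ioi 0))
    rwa [Real.zero_rpow hexp.ne', mul_zero] at h
  obtain ⟨δ, hδ, hδ0, hδδ₀⟩ := ((htendsto.eventually_lt_const hε).and
    (Ioc_mem_nhdsGT hδ₀)).exists
  exact ⟨δ, hδ0, hδδ₀, hδ⟩

lemma div_rpow_mul_rpow_le {r s : ℝ} (hq : 1 ≤ q) (hA : 0 ≤ A) (hr : 0 < r) (hs : 0 ≤ s)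
    (hsr : s ≤ r) : (A / r) ^ (1 / q) * s ^ (1 - 1 / q) ≤ oscBound q A r := by
  have hexp : 0 ≤ 1 - 1 / q := sub_nonneg.2 ((div_le_one (by linarith)).2 hq)
  calc (A / r) ^ (1 / q) * s ^ (1 - 1 / q) ≤ (A / r) ^ (1 / q) * r ^ (1 - 1 / q) := by gcongr
    _ = oscBound q A r := by
      rw [oscBound, Real.div_rpow hA hr.le, show 1 - 2 / q = (1 - 1 / q) - 1 / q by ring,
        Real.rpow_sub hr (1 - 1 / q)]
      ring

-- Up to the sign of `u x - u y`, the tangent-point integrand is `|∂σ/∂y|^q` for the secant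
-- direction `σ y = normalize (u y - u x)`.
lemma norm_normalize_sub_sub_normalize_sub_le (hq : 1 ≤ q) (hu : ContDiff ℝ 1 u)
    (hper : Function.Periodic u 1) (hA : 0 ≤ A) {x y₁ y₂ r : ℝ} (hr : 0 < r)
    (hx : tangentPointDensity q u x ≤ ENNReal.ofReal (A / r)) (hy : y₁ ≤ y₂) (hyr : y₂ - y₁ ≤ r)
    (hy1 : y₂ ≤ y₁ + 1) (hne : ∀ y ∈ Icc y₁ y₂, u y ≠ u x) :
    ‖normalize (u y₂ - u x) - normalize (u y₁ - u x)‖ ≤ oscBound q A r := by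
  have hq0 : 0 < q := by linarith
  have hexp : 0 ≤ 1 - 1 / q := sub_nonneg.2 ((div_le_one hq0).2 hq)
  have hs : 0 ≤ y₂ - y₁ := sub_nonneg.2 hy
  have hsub : ∀ y ∈ Icc y₁ y₂, u y - u x ≠ 0 := fun y hy => sub_ne_zero.2 (hne y hy)
  have hderiv : ∫⁻ y in Ioc y₁ y₂, ‖deriv (fun y => normalize (u y - u x)) y‖ₑ ^ q ≤
      ENNReal.ofReal (A / r) := by
    refine Eq.trans_le ?_ ((setLIntegral_tangentPointIntegrand_le hper x hy1).trans hx)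
    refine setLIntegral_congr_fun measurableSet_Ioc fun y hy => ?_
    rw [enorm_rpow_deriv_normalize hq0.le ((hu.differentiable one_ne_zero y).sub_const _)
      (hsub y (Ioc_subset_Icc_self hy)), deriv_sub_const, ← neg_sub (u x), wedgeNormSq_neg_right,
      norm_neg, tangentPointIntegrand]
  have hholder := enorm_sub_le_lintegral_deriv_rpow hq hy
    (contDiffOn_normalize (hu.contDiffOn.sub contDiffOn_const) hsub)
  rw [← ofReal_norm] at hholder
  refine (ENNReal.ofReal_le_ofReal_iff (oscBound_nonneg hA hr.le)).1 (hholder.trans ?_)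
  calc _ ≤ ENNReal.ofReal (A / r) ^ (1 / q) * ENNReal.ofReal (y₂ - y₁) ^ (1 - 1 / q) := by gcongr
    _ = ENNReal.ofReal ((A / r) ^ (1 / q) * (y₂ - y₁) ^ (1 - 1 / q)) := by
      rw [ENNReal.ofReal_rpow_of_nonneg (by positivity) (by positivity),
        ENNReal.ofReal_rpow_of_nonneg hs hexp, ENNReal.ofReal_mul (by positivity)]
    _ ≤ _ := ENNReal.ofReal_le_ofReal (div_rpow_mul_rpow_le hq hA hr hs hyr)

lemma norm_normalize_sub_sub_normalize_deriv_le (hq : 1 ≤ q) (hu : IsEmbeddedLoop u)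
    (hA : 0 ≤ A) {x y r : ℝ} (hd : deriv u x ≠ 0)
    (hx : tangentPointDensity q u x ≤ ENNReal.ofReal (A / r)) (hxy : x < y) (hyr : y - x ≤ r)
    (hy1 : y < x + 1) :
    ‖normalize (u y - u x) - normalize (deriv u x)‖ ≤ oscBound q A r := by
  refine le_of_tendsto (tendsto_const_nhds.sub (tendsto_normalize_sub_right
    (hu.contDiff.differentiable one_ne_zero x) hd)).norm ?_
  filter_upwards [Ioo_mem_nhdsGT hxy] with t ⟨hxt, hty⟩
  exact norm_normalize_sub_sub_normalize_sub_le hq hu.contDiff hu.periodic hA (by linarith) hx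
    hty.le (by linarith) (by linarith)
    fun z ⟨htz, hzy⟩ => (hu.ne_of_lt (by linarith) (by linarith)).symm

lemma norm_neg_normalize_deriv_sub_normalize_sub_le (hq : 1 ≤ q) (hu : IsEmbeddedLoop u)
    (hA : 0 ≤ A) {x y r : ℝ} (hd : deriv u y ≠ 0)
    (hy : tangentPointDensity q u y ≤ ENNReal.ofReal (A / r)) (hxy : x < y) (hyr : y - x ≤ r)
    (hy1 : y < x + 1) :
    ‖-normalize (deriv u y) - normalize (u x - u y)‖ ≤ oscBound q A r := by
  refine le_of_tendsto ((tendsto_normalize_sub_left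
    (hu.contDiff.differentiable one_ne_zero y) hd).sub tendsto_const_nhds).norm ?_
  filter_upwards [Ioo_mem_nhdsLT hxy] with t ⟨hxt, hty⟩
  exact norm_normalize_sub_sub_normalize_sub_le hq hu.contDiff hu.periodic hA (by linarith) hy
    hxt.le (by linarith) (by linarith)
    fun z ⟨hxz, hzt⟩ => hu.ne_of_lt (by linarith) (by linarith)

lemma norm_normalize_deriv_sub_le (hq : 1 ≤ q) (hu : IsEmbeddedLoop u) (hA : 0 ≤ A)
    (hd : ∀ x, deriv u x ≠ 0) {x y r : ℝ} (hr : 0 < r) (hr1 : r < 1) (hxy : |x - y| ≤ r)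
    (hx : tangentPointDensity q u x ≤ ENNReal.ofReal (A / r))
    (hy : tangentPointDensity q u y ≤ ENNReal.ofReal (A / r)) :
    ‖normalize (deriv u x) - normalize (deriv u y)‖ ≤ 2 * oscBound q A r := by
  wlog hlt : x < y generalizing x y
  · rcases (not_lt.1 hlt).eq_or_lt with rfl | hgt
    · rw [sub_self, norm_zero]
      exact mul_nonneg zero_le_two (oscBound_nonneg hA hr.le)
    · rw [norm_sub_rev]
      exact this (by rwa [abs_sub_comm]) hy hx hgt
  rw [abs_sub_comm, abs_of_pos (sub_pos.2 hlt)] at hxy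
  have hright := norm_normalize_sub_sub_normalize_deriv_le hq hu hA (hd x) hx hlt hxy
    (by linarith)
  have hleft := norm_neg_normalize_deriv_sub_normalize_sub_le hq hu hA (hd y) hy hlt hxy
    (by linarith)
  rw [← neg_sub (u y), normalize_neg] at hleft
  calc ‖normalize (deriv u x) - normalize (deriv u y)‖
      = ‖(-normalize (deriv u y) - -normalize (u y - u x)) -
          (normalize (u y - u x) - normalize (deriv u x))‖ := by congr 1; abel
    _ ≤ _ := (norm_sub_le _ _).trans (by linarith)

/-- A `C¹` embedded loop `u` with `lam ≤ |u'| ≤ Λ`, whose double integral of the tangent-point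
integrand (`q` times the tangent-point energy) is at most `A`. -/
structure IsControlledLoop (q A lam Λ : ℝ) (u : ℝ → E) : Prop extends IsEmbeddedLoop u where
  le_speed : ∀ x, lam ≤ ‖deriv u x‖
  speed_le : ∀ x, ‖deriv u x‖ ≤ Λ
  lintegral_density_le : ∫⁻ x in Ioc (0 : ℝ) 1, tangentPointDensity q u x ≤ ENNReal.ofReal A

lemma IsControlledLoop.lam_le (hu : IsControlledLoop q A lam Λ u) : lam ≤ Λ :=
  (hu.le_speed 0).trans (hu.speed_le 0)

-- `w` and all points outside a set of measure at most `(b - a) / K` have small density, so their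
-- tangents differ little; on the exceptional set only `|u'| ≤ Λ` is used.
lemma exists_forall_le_inner_sub (hq : 1 ≤ q) (hu : IsControlledLoop q A lam Λ u)
    (hA : 0 < A) (hlam : 0 < lam) {a b K : ℝ} (hab : a < b) (hba : b - a < 1) (hK : 1 ≤ K)
    (hosc : oscBound q (K * A) (b - a) ≤ 1 / 2) :
    ∃ e : E, ‖e‖ = 1 ∧ ∀ s t, a ≤ s → s ≤ t → t ≤ b →
      lam / 2 * (t - s) - (lam / 2 + Λ) * ((b - a) / K) ≤ ⟪e, u t - u s⟫ := by
  have hr : 0 < b - a := sub_pos.2 hab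
  have hd : ∀ x, deriv u x ≠ 0 := fun x => norm_pos_iff.1 (hlam.trans_le (hu.le_speed x))
  have hdiff : Differentiable ℝ u := hu.contDiff.differentiable one_ne_zero
  have hΛ : lam ≤ Λ := hu.lam_le
  obtain ⟨w, ⟨haw, hwb⟩, hw⟩ := exists_tangentPointDensity_le hu.contDiff hu.periodic
    hu.lintegral_density_le hab (by linarith)
  replace hw : tangentPointDensity q u w ≤ ENNReal.ofReal (K * A / (b - a)) :=
    hw.trans (ENNReal.ofReal_le_ofReal (by gcongr; exact le_mul_of_one_le_left hA.le hK))
  set e := normalize (deriv u w)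
  have he : ‖e‖ = 1 := norm_normalize (hd w)
  refine ⟨e, he, fun s t has hst htb => ?_⟩
  have hderiv : ∀ z, deriv (fun z => ⟪e, u z⟫) z = ⟪e, deriv u z⟫ := fun z => by
    simpa using ((hasDerivAt_const z e).inner ℝ (hdiff z).hasDerivAt).deriv
  rw [inner_sub_right]
  refine mul_sub_sub_le_image_sub (contDiff_const.inner ℝ hu.contDiff)
    (measurableSet_lt measurable_const (measurable_tangentPointDensity q hu.contDiff)) hst
    (by linarith) (fun z ⟨hsz, hzt⟩ hz => ?_) (fun z => ?_)
    ((volume_lt_tangentPointDensity_le hu.contDiff hu.periodic hA.le hu.lintegral_density_le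
      (B := K * A / (b - a)) (by positivity) (by linarith)).trans_eq (by field_simp))
  · have hinner : 1 / 2 ≤ ⟪e, normalize (deriv u z)⟫ := by
      have hwz : |w - z| ≤ b - a := abs_sub_le_iff.2 ⟨by linarith, by linarith⟩
      have htangent := norm_normalize_deriv_sub_le hq hu.toIsEmbeddedLoop (by positivity) hd hr
        hba hwz hw (not_lt.1 hz)
      exact half_le_inner_of_norm_sub_le_one he (norm_normalize (hd z))
        (htangent.trans (by linarith))
    rw [hderiv, ← norm_smul_normalize (deriv u z), real_inner_smul_right]
    nlinarith [hu.le_speed z]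
  · rw [hderiv]
    have hcs := (abs_real_inner_le_norm e (deriv u z)).trans_eq (by rw [he, one_mul])
    linarith [neg_le_of_abs_le hcs, hu.speed_le z]

-- With `K = 32 * Λ / lam` the exceptional set costs at most half of the main term
-- `lam / 2 * (t - s)` as soon as `[s, t]` fills half of the arc.
lemma exists_forall_mul_le_inner_sub (hq : 1 ≤ q) (hu : IsControlledLoop q A lam Λ u)
    (hA : 0 < A) (hlam : 0 < lam) {a b : ℝ} (hab : a < b) (hba : b - a < 1)
    (hosc : oscBound q (32 * Λ / lam * A) (b - a) < lam / (8 * Λ)) :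
    ∃ e : E, ‖e‖ = 1 ∧ ∀ s t, a ≤ s → t ≤ b → (b - a) / 2 ≤ t - s →
      lam / 4 * (t - s) ≤ ⟪e, u t - u s⟫ := by
  have hΛ : lam ≤ Λ := hu.lam_le
  have hΛ0 : 0 < Λ := hlam.trans_le hΛ
  have hratio : 1 ≤ Λ / lam := (one_le_div hlam).2 hΛ
  have hhalf : lam / (8 * Λ) ≤ 1 / 2 := (div_le_iff₀ (by positivity)).2 (by linarith)
  obtain ⟨e, he, h⟩ := exists_forall_le_inner_sub hq hu hA hlam hab hba
    (K := 32 * Λ / lam) (by rw [mul_div_assoc]; linarith) (hosc.le.trans hhalf)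
  refine ⟨e, he, fun s t has htb hst => le_trans ?_ (h s t has (by linarith) htb)⟩
  have herror : (lam / 2 + Λ) * ((b - a) / (32 * Λ / lam)) ≤ lam / 8 * (b - a) :=
    calc (lam / 2 + Λ) * ((b - a) / (32 * Λ / lam))
        ≤ (Λ + Λ) * ((b - a) / (32 * Λ / lam)) := by gcongr; linarith
      _ = lam / 16 * (b - a) := by field_simp; ring
      _ ≤ lam / 8 * (b - a) := by linarith [mul_pos hlam (sub_pos.2 hab)]
  linarith [mul_le_mul_of_nonneg_left hst hlam.le]

lemma mul_abs_sub_le_norm_sub (hq : 1 ≤ q) (hu : IsControlledLoop q A lam Λ u)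
    (hA : 0 < A) (hlam : 0 < lam) {x y : ℝ} (hxy : |x - y| < 1)
    (hosc : oscBound q (32 * Λ / lam * A) |x - y| < lam / (8 * Λ)) :
    lam / 4 * |x - y| ≤ ‖u x - u y‖ := by
  wlog hle : x ≤ y generalizing x y
  · rw [norm_sub_rev, abs_sub_comm]
    exact this (by rwa [abs_sub_comm]) (by rwa [abs_sub_comm]) (le_of_not_ge hle)
  rcases hle.eq_or_lt with rfl | hlt
  · rw [sub_self, abs_zero, mul_zero]
    exact norm_nonneg _
  have habs : |x - y| = y - x := by rw [abs_sub_comm, abs_of_pos (sub_pos.2 hlt)]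
  rw [habs] at hxy hosc ⊢
  obtain ⟨e, he, h⟩ := exists_forall_mul_le_inner_sub hq hu hA hlam hlt hxy hosc
  calc lam / 4 * (y - x) ≤ ⟪e, u y - u x⟫ := h x y le_rfl le_rfl (by linarith)
    _ ≤ ‖e‖ * ‖u y - u x‖ := real_inner_le_norm _ _
    _ = ‖u x - u y‖ := by rw [he, one_mul, norm_sub_rev]

-- The arc passes by `p` at a distance much smaller than its length, so the direction towards it
-- seen from `p` turns by a fixed amount.
lemma div_le_norm_normalize_sub (hu : IsControlledLoop q A lam Λ u) (hlam : 0 < lam) {y r : ℝ}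
    (hr : 0 < r) {e p : E} (he : ‖e‖ = 1) (hright : lam / 8 * r ≤ ⟪e, u (y + r / 2) - u y⟫)
    (hleft : lam / 8 * r ≤ ⟪e, u y - u (y - r / 2)⟫) (hp : ‖u y - p‖ ≤ lam / 16 * r) :
    lam / (8 * Λ) ≤ ‖normalize (u (y + r / 2) - p) - normalize (u (y - r / 2) - p)‖ := by
  have hΛ0 : 0 < Λ := hlam.trans_le hu.lam_le
  have hdist : ∀ t, |t - y| = r / 2 → ‖u t - p‖ ≤ Λ * r := fun t ht =>
    calc ‖u t - p‖ ≤ ‖u t - u y‖ + ‖u y - p‖ := norm_sub_le_norm_sub_add_norm_sub _ _ _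
      _ ≤ Λ * (r / 2) + lam / 16 * r := by
        rw [← ht]
        exact add_le_add (norm_sub_le_mul_abs_sub (hu.contDiff.differentiable one_ne_zero)
          hu.speed_le t y) hp
      _ ≤ Λ * r := by linarith [mul_le_mul_of_nonneg_right hu.lam_le hr.le, mul_pos hlam hr]
  have hep : |⟪e, u y - p⟫| ≤ lam / 16 * r :=
    (abs_real_inner_le_norm e _).trans (by rwa [he, one_mul])
  obtain ⟨hep₁, hep₂⟩ := abs_le.1 hep
  calc lam / (8 * Λ) = 2 * (lam / 16 * r / (Λ * r)) := by field_simp; norm_num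
    _ ≤ _ := by
      refine two_mul_div_le_norm_normalize_sub he (by positivity) (hdist _ ?_) (hdist _ ?_) ?_ ?_
      · rw [add_sub_cancel_left, abs_of_pos (half_pos hr)]
      · rw [sub_sub_cancel_left, abs_neg, abs_of_pos (half_pos hr)]
      · rw [← sub_add_sub_cancel _ (u y), inner_add_right]
        linarith
      · rw [neg_sub, ← sub_sub_sub_cancel_left _ _ (u y), inner_sub_right]
        linarith

lemma exists_norm_sub_le_tangentPointDensity_le (hu : IsControlledLoop q A lam Λ u)
    (hlam : 0 < lam) (x : ℝ) {r : ℝ} (hr : 0 < r) (hr1 : r ≤ 1) :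
    ∃ w ∈ Ioc x (x + r / 32), ‖u w - u x‖ ≤ lam / 32 * r ∧
      tangentPointDensity q u w ≤ ENNReal.ofReal (32 * Λ / lam * A / r) := by
  have hΛ0 : 0 < Λ := hlam.trans_le hu.lam_le
  have hρ : lam / (32 * Λ) * r ≤ r / 32 :=
    calc lam / (32 * Λ) * r ≤ Λ / (32 * Λ) * r := by gcongr; exact hu.lam_le
      _ = r / 32 := by field_simp
  obtain ⟨w, ⟨hxw, hwx⟩, hw⟩ := exists_tangentPointDensity_le hu.contDiff hu.periodic
    hu.lintegral_density_le (a := x) (b := x + lam / (32 * Λ) * r)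
    (lt_add_of_pos_right x (by positivity)) (by linarith)
  refine ⟨w, ⟨hxw, by linarith⟩, ?_, hw.trans_eq ?_⟩
  · calc ‖u w - u x‖ ≤ Λ * |w - x| := norm_sub_le_mul_abs_sub
          (hu.contDiff.differentiable one_ne_zero) hu.speed_le w x
      _ ≤ Λ * (lam / (32 * Λ) * r) := by
        rw [abs_of_pos (sub_pos.2 hxw)]
        gcongr
        linarith
      _ = lam / 32 * r := by field_simp
  · congr 1
    field_simp
    ring

lemma norm_sub_ne_of_lt_abs_sub (hq : 1 ≤ q) (hu : IsControlledLoop q A lam Λ u)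
    (hA : 0 < A) (hlam : 0 < lam) {x y r : ℝ} (hr : 0 < r) (hr8 : r ≤ 1 / 8) (hrxy : r < |x - y|)
    (hxy : |x - y| ≤ 1 / 2) (hosc : oscBound q (32 * Λ / lam * A) r < lam / (8 * Λ)) :
    ‖u x - u y‖ ≠ lam / 32 * r := by
  intro hd
  have hΛ0 : 0 < Λ := hlam.trans_le hu.lam_le
  obtain ⟨w, ⟨hxw, hwx⟩, hwux, hw⟩ :=
    exists_norm_sub_le_tangentPointDensity_le hu hlam x hr (by linarith)
  have hyw : ‖u y - u w‖ ≤ lam / 16 * r := by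
    rw [norm_sub_rev]
    linarith [norm_sub_le_norm_sub_add_norm_sub (u w) (u x) (u y)]
  have hlength : y + r / 2 - (y - r / 2) = r := by ring
  obtain ⟨e, he, h⟩ := exists_forall_mul_le_inner_sub hq hu hA hlam
    (a := y - r / 2) (b := y + r / 2) (by linarith) (by linarith) (by rwa [hlength])
  rw [hlength] at h
  have hne : ∀ t ∈ Icc (y - r / 2) (y + r / 2), u t ≠ u w := by
    rintro t ⟨hyt, hty⟩
    rcases lt_abs.1 hrxy with hlt | hlt
    · exact hu.ne_of_lt (by linarith) (by linarith [le_abs_self (x - y)])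
    · exact (hu.ne_of_lt (by linarith) (by linarith [neg_le_abs (x - y)])).symm
  refine hosc.not_ge ((div_le_norm_normalize_sub hu hlam hr he ?_ ?_ hyw).trans
    (norm_normalize_sub_sub_normalize_sub_le hq hu.contDiff hu.periodic (by positivity) hr hw
      (by linarith) hlength.le (by linarith) hne))
  · exact le_trans (by linarith) (h y (y + r / 2) (by linarith) le_rfl (by linarith))
  · exact le_trans (by linarith) (h (y - r / 2) y le_rfl (by linarith) (by linarith))

lemma abs_sub_le_mul_norm_sub (hq : 2 ≤ q) (hu : IsControlledLoop q A lam Λ u) (hA : 0 < A)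
    (hlam : 0 < lam) {δ : ℝ} (hδ : 0 < δ) (hδ8 : δ ≤ 1 / 8)
    (hosc : oscBound q (32 * Λ / lam * A) δ < lam / (8 * Λ)) {x y : ℝ} (hxy : |x - y| ≤ 1 / 2) :
    |x - y| ≤ 16 / (lam * δ) * ‖u x - u y‖ := by
  have hΛ0 : 0 < Λ := hlam.trans_le hu.lam_le
  have hq1 : 1 ≤ q := by linarith
  have hosc_le : ∀ r, 0 ≤ r → r ≤ δ → oscBound q (32 * Λ / lam * A) r < lam / (8 * Λ) :=
    fun r hr hrδ => (oscBound_le_oscBound hq (by positivity) hr hrδ).trans_lt hosc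
  rw [div_mul_eq_mul_div, le_div_iff₀ (by positivity)]
  rcases le_or_gt |x - y| δ with hnear | hfar
  · have h := mul_abs_sub_le_norm_sub hq1 hu hA hlam (by linarith)
      (hosc_le _ (abs_nonneg _) hnear)
    nlinarith [norm_nonneg (u x - u y)]
  · have h : lam / 32 * δ < ‖u x - u y‖ := by
      by_contra! hle
      have hd : 0 < ‖u x - u y‖ := norm_pos_iff.2 <| sub_ne_zero.2 <|
        hu.ne_of_abs_sub_lt_one (sub_ne_zero.1 (abs_pos.1 (hδ.trans hfar))) (by linarith)
      have hr : 32 / lam * ‖u x - u y‖ ≤ δ := by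
        rw [div_mul_eq_mul_div, div_le_iff₀ hlam]
        linarith
      exact norm_sub_ne_of_lt_abs_sub hq1 hu hA hlam (by positivity) (hr.trans hδ8)
        (hr.trans_lt hfar) hxy (hosc_le _ (by positivity) hr) (by field_simp)
    calc |x - y| * (lam * δ) ≤ 1 / 2 * (lam * δ) := by gcongr
      _ ≤ 16 * ‖u x - u y‖ := by linarith

end TangentPoint

section UniformEstimate

universe v

theorem uniform_biLipschitz_estimate_general {q lam Λ M : ℝ} (hq : 2 < q) (hlam : 0 < lam)
    (hΛ : 0 < Λ) (hM : 0 < M) :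
    ∃ C : ℝ, 0 < C ∧ ∀ (E : Type v) [NormedAddCommGroup E] [InnerProductSpace ℝ E] (u : ℝ → E),
      IsEmbeddedLoop u → (∀ x, lam ≤ ‖deriv u x‖) → (∀ x, ‖deriv u x‖ ≤ Λ) →
      tangentPointEnergy q u ≤ ENNReal.ofReal M →
      ∀ x y : ℝ, circDist x y ≤ C * ‖u x - u y‖ := by
  have hq0 : 0 < q := by linarith
  obtain ⟨δ, hδ, hδ8, hosc⟩ := exists_oscBound_lt hq (32 * Λ / lam * (q * M))
    (ε := lam / (8 * Λ)) (δ₀ := 1 / 8) (by positivity) (by norm_num)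
  refine ⟨16 / (lam * δ), by positivity, fun E _ _ u hu hl hL hE => ?_⟩
  have hcontrolled : IsControlledLoop q (q * M) lam Λ u := by
    refine ⟨hu, hl, hL, ?_⟩
    rw [lintegral_tangentPointDensity hq0 hu.contDiff, ENNReal.ofReal_mul hq0.le]
    gcongr
  exact circDist_le_of_abs_sub_le_half hu.periodic fun x y hxy =>
    abs_sub_le_mul_norm_sub hq.le hcontrolled (by positivity) hlam hδ hδ8 hosc hxy

end UniformEstimate

/-- Uniform bi-Lipschitz estimate, Proposition 3.6: there is
`C = C(lam, Λ, M, n, q)` such that every embedded regular curve with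
`lam ≤ |u'| ≤ Λ` and `TP(u) ≤ M` satisfies
`|x - y|_{ℝ/ℤ} ≤ C |u(x) - u(y)|` for all `x, y`; in particular `bil(u) ≤ C`. -/
theorem uniform_biLipschitz_estimate (n : ℕ) (q lam Λ M : ℝ) (hq : 2 < q)
    (hlam : 0 < lam) (hΛ : 0 < Λ) (hM : 0 < M) :
    ∃ C : ℝ, 0 < C ∧ ∀ u : ℝ → EuclideanSpace ℝ (Fin n),
      ContDiff ℝ 1 u → Function.Periodic u 1 → Embedded u →
      sobSemPow (1 - 1 / q) q (deriv u) < ⊤ →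
      (∀ x, lam ≤ ‖deriv u x‖) → (∀ x, ‖deriv u x‖ ≤ Λ) →
      TPe q u ≤ ENNReal.ofReal M →
      (∀ x y : ℝ, circDist x y ≤ C * ‖u x - u y‖) ∧ bil u ≤ ENNReal.ofReal C := by
  obtain ⟨C, hC, h⟩ := uniform_biLipschitz_estimate_general hq hlam hΛ hM
  exact ⟨C, hC, fun u hu hper hemb _ hl hL hE =>
    have hbound := h _ u ⟨hu, hper, hemb⟩ hl hL hE
    ⟨hbound, bil_le_ofReal hbound⟩⟩
end
end
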